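/- arXiv:1907.05455 — 2 statements merged into one kernel-verified Lean document; each statement's English description precedes it below -/
import Mathlib

section
/- Let D be a pseudoconvex domain in ℂ^N and let (D_n) be an exhaustion of D by strictly pseudoconvex domains that are 𝒪(D)-convex (i.e., each closure cl(D_n) is a compact 𝒪(D)-convex subset of D_{n+1} and ⋃_n D_n = D). Let (M_n) be a sequence of positive numbers. Then there exist compact sets Γ_n ⊆ D_{n+1} \ cl(D_n) such that cl(D_n) ∪ Γ_n ∪ Γ_{n+1} ∪ ⋯ ∪ Γ_m is 𝒪(D)-convex for every m ≥ n, and every continuous path connecting bD_n to bD_{n+1} and omitting Γ_n has length (total variation) greater than M_n. -/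
open Set Filter Topology Metric MeasureTheory
open scoped ENNReal NNReal InnerProductSpace ComplexConjugate

noncomputable section

/-- `ℂ^N` with the Euclidean structure. -/
abbrev EN (N : ℕ) := EuclideanSpace ℂ (Fin N)

instance {N : ℕ} : MeasurableSpace (EN N) := borel _
instance {N : ℕ} : BorelSpace (EN N) := ⟨rfl⟩

/-- A domain: a nonempty open connected subset. -/
def IsDomainSet {N : ℕ} (D : Set (EN N)) : Prop := IsOpen D ∧ IsConnected D

/-- `u` is plurisubharmonic on `D`: upper semicontinuous on `D`, and its restriction to
every complex affine line satisfies the sub-mean value inequality on every closed disc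
(of that line) contained in `D`. -/
def PlurisubharmonicOn {N : ℕ} (u : EN N → ℝ) (D : Set (EN N)) : Prop :=
  UpperSemicontinuousOn u D ∧
  ∀ (a b : EN N) (t₀ : ℂ) (r : ℝ), 0 < r →
    (fun t : ℂ => a + t • b) '' Metric.closedBall t₀ r ⊆ D →
    u (a + t₀ • b) ≤ (2 * Real.pi)⁻¹ *
      ∫ θ in (0:ℝ)..(2 * Real.pi), u (a + (t₀ + r * Complex.exp (θ * Complex.I)) • b)

/-- `D` is a pseudoconvex domain: a domain carrying a continuous plurisubharmonic
exhaustion function. -/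
def Pseudoconvex {N : ℕ} (D : Set (EN N)) : Prop :=
  IsDomainSet D ∧ ∃ u : EN N → ℝ, ContinuousOn u D ∧ PlurisubharmonicOn u D ∧
    ∀ c : ℝ, IsCompact (closure {z ∈ D | u z < c}) ∧ closure {z ∈ D | u z < c} ⊆ D

/-- The space `𝒪(D)` of holomorphic functions on `D`, as a submodule of `ℂ^N → ℂ`. -/
def Hol {N : ℕ} (D : Set (EN N)) : Submodule ℂ (EN N → ℂ) where
  carrier := {f | DifferentiableOn ℂ f D}
  add_mem' hf hg := hf.add hg
  zero_mem' := differentiableOn_const 0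
  smul_mem' c f hf := hf.const_smul c

/-- The topology of uniform convergence on compact subsets of `D`, on `𝒪(D)`. -/
instance holTopology {N : ℕ} (D : Set (EN N)) : TopologicalSpace ↥(Hol D) :=
  TopologicalSpace.induced
    (fun f => UniformOnFun.ofFun {K : Set (EN N) | K ⊆ D ∧ IsCompact K} f.1)
    inferInstance

/-- A set is residual if it contains a dense `G_δ` set. -/
def ResidualIn {X : Type*} [TopologicalSpace X] (S : Set X) : Prop :=
  ∃ T : Set X, T ⊆ S ∧ IsGδ T ∧ Dense T

/-- `S` is densely lineable: `S ∪ {0}` contains a dense vector subspace. -/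
def DenselyLineableIn {X : Type*} [TopologicalSpace X] [AddCommMonoid X] [Module ℂ X]
    (S : Set X) : Prop :=
  ∃ p : Submodule ℂ X, Dense (p : Set X) ∧ (p : Set X) ⊆ S ∪ {0}

/-- `S` is spaceable: `S ∪ {0}` contains a closed infinite-dimensional vector subspace. -/
def SpaceableIn {X : Type*} [TopologicalSpace X] [AddCommMonoid X] [Module ℂ X]
    (S : Set X) : Prop :=
  ∃ p : Submodule ℂ X, IsClosed (p : Set X) ∧ ¬ Module.Finite ℂ ↥p ∧ (p : Set X) ⊆ S ∪ {0}

/-- A finite length path to `bD`: continuous and piecewise `C¹` on `[0,1)`, with values in `D`,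
finite length (total variation), converging to a boundary point of `D` as `r → 1`. -/
def FiniteLengthPathTo {N : ℕ} (D : Set (EN N)) (γ : ℝ → EN N) : Prop :=
  MapsTo γ (Ico (0:ℝ) 1) D ∧ ContinuousOn γ (Ico (0:ℝ) 1) ∧
  (∃ u : ℕ → ℝ, u 0 = 0 ∧ StrictMono u ∧ (∀ n, u n < 1) ∧ Tendsto u atTop (𝓝 1) ∧
    ∀ n, ContDiffOn ℝ 1 γ (Icc (u n) (u (n+1)))) ∧
  eVariationOn γ (Ico (0:ℝ) 1) < ⊤ ∧
  ∃ ζ ∈ frontier D, Tendsto γ (𝓝[<] (1:ℝ)) (𝓝 ζ)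

/-- The set of `f ∈ 𝒪(D)` with maximal cluster set along every finite length path to `bD`. -/
def WildSet {N : ℕ} (D : Set (EN N)) : Set ↥(Hol D) :=
  {f | ∀ γ : ℝ → EN N, FiniteLengthPathTo D γ → ∀ c : ℂ,
    ∃ r : ℕ → ℝ, (∀ n, r n ∈ Ico (0:ℝ) 1) ∧ Tendsto r atTop (𝓝 1) ∧
      Tendsto (fun n => f.1 (γ (r n))) atTop (𝓝 c)}

/-- The `𝒪(D)`-hull of `K`. -/
def holHull {N : ℕ} (D K : Set (EN N)) : Set (EN N) :=
  {z ∈ D | ∀ φ : EN N → ℂ, DifferentiableOn ℂ φ D → ‖φ z‖ ≤ ⨆ w ∈ K, ‖φ w‖}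

/-- `K` is `𝒪(D)`-convex. -/
def HolConvexIn {N : ℕ} (D K : Set (EN N)) : Prop := K ⊆ D ∧ holHull D K = K

/-- The polynomial hull of a compact subset of `ℂ`. -/
def polyHull1 (E : Set ℂ) : Set ℂ :=
  {z | ∀ p : Polynomial ℂ, ‖p.eval z‖ ≤ ⨆ w ∈ E, ‖p.eval w‖}

/-- The polynomial hull of a subset of `ℂ^N`. -/
def polyHull {N : ℕ} (E : Set (EN N)) : Set (EN N) :=
  {z | ∀ p : MvPolynomial (Fin N) ℂ,
    ‖MvPolynomial.eval (fun j => z j) p‖ ≤ ⨆ w ∈ E, ‖MvPolynomial.eval (fun j => w j) p‖}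

/-- `E ⊆ ℂ^N` is polynomially convex. -/
def PolynomiallyConvex {N : ℕ} (E : Set (EN N)) : Prop := polyHull E = E

/-- The (real) Hessian of `ρ` at `p`, applied to the pair `(v, w)`. -/
def Hess {N : ℕ} (ρ : EN N → ℝ) (p v w : EN N) : ℝ :=
  fderiv ℝ (fderiv ℝ ρ) p v w

/-- The Levi form `∑_{j,k} ∂²ρ/∂z_j∂z̄_k (p) w_j w̄_k`, expressed through the real Hessian. -/
def LeviForm {N : ℕ} (ρ : EN N → ℝ) (p w : EN N) : ℝ :=
  (Hess ρ p w w + Hess ρ p (Complex.I • w) (Complex.I • w)) / 4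

/-- `w` belongs to the complex tangent space `{w : ∑_j ∂ρ/∂z_j(p) w_j = 0}` at `p`. -/
def ComplexTangent {N : ℕ} (ρ : EN N → ℝ) (p w : EN N) : Prop :=
  fderiv ℝ ρ p w = 0 ∧ fderiv ℝ ρ p (Complex.I • w) = 0

/-- `ρ` is a `C²` defining function for `D` on the open neighborhood `V` of `cl D`. -/
def IsDefiningFunctionOn {N : ℕ} (D : Set (EN N)) (ρ : EN N → ℝ) (V : Set (EN N)) : Prop :=
  IsOpen V ∧ closure D ⊆ V ∧ ContDiffOn ℝ 2 ρ V ∧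
  D = {z ∈ V | ρ z < 0} ∧ ∀ p ∈ frontier D, fderiv ℝ ρ p ≠ 0

/-- `D` is a strictly pseudoconvex domain with defining function `ρ`. -/
def StrictPSCWith {N : ℕ} (D : Set (EN N)) (ρ : EN N → ℝ) : Prop :=
  IsDomainSet D ∧ Bornology.IsBounded D ∧ (∃ V, IsDefiningFunctionOn D ρ V) ∧
  ∀ p ∈ frontier D, ∀ w : EN N, w ≠ 0 → ComplexTangent ρ p w → 0 < LeviForm ρ p w

/-- `D` is a strictly pseudoconvex domain. -/
def StrictlyPseudoconvex {N : ℕ} (D : Set (EN N)) : Prop := ∃ ρ, StrictPSCWith D ρ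

/-- `ρ` and `σ` are at `C²`-distance `< ε` on `V`. -/
def C2DistLt {N : ℕ} (V : Set (EN N)) (ρ σ : EN N → ℝ) (ε : ℝ) : Prop :=
  ∀ z ∈ V, |ρ z - σ z| + ‖fderiv ℝ ρ z - fderiv ℝ σ z‖ +
    ‖fderiv ℝ (fderiv ℝ ρ) z - fderiv ℝ (fderiv ℝ σ) z‖ < ε

/-- The standing assumptions on the map `γ : bD × [0,1] → cl D`: it is `C^k`, maps
`bD × [0,1)` into `D`, satisfies `γ(x,1) = x`, and the curves `r ↦ γ(x,r)` hit `bD`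
transversally at `x` (the `r`-derivative at `1` is not annihilated by `dρ(x)`,
i.e. it is not tangent to `bD` at `x`). -/
def GammaMap {N : ℕ} (D : Set (EN N)) (ρ : EN N → ℝ) (γ : EN N × ℝ → EN N) (k : ℕ) : Prop :=
  ContDiffOn ℝ k γ ((frontier D) ×ˢ Icc (0:ℝ) 1) ∧
  (∀ x ∈ frontier D, ∀ r ∈ Ico (0:ℝ) 1, γ (x, r) ∈ D) ∧
  (∀ x ∈ frontier D, γ (x, 1) = x) ∧
  ∀ x ∈ frontier D, fderiv ℝ ρ x (derivWithin (fun r => γ (x, r)) (Icc (0:ℝ) 1) 1) ≠ 0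

/-- Assumption (†): for all `r` close enough to `1`, `bD_r := γ(bD × {r})` bounds a strictly
pseudoconvex domain `D_r ⊆ D` whose defining function converges to `ρ` in `C²` norm on a
neighborhood `V` of `cl D` as `r → 1`. -/
def Dagger {N : ℕ} (D : Set (EN N)) (ρ : EN N → ℝ) (γ : EN N × ℝ → EN N) : Prop :=
  ∃ V : Set (EN N), IsOpen V ∧ closure D ⊆ V ∧
  ∃ (Dr : ℝ → Set (EN N)) (ρr : ℝ → EN N → ℝ),
    ∀ ε > 0, ∃ r₀ ∈ Ico (0:ℝ) 1, ∀ r ∈ Ioo r₀ 1,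
      StrictPSCWith (Dr r) (ρr r) ∧ Dr r ⊆ D ∧
      frontier (Dr r) = (fun x => γ (x, r)) '' frontier D ∧
      C2DistLt V (ρr r) ρ ε

/-- The `(2N-1)`-dimensional Hausdorff (surface) measure on `bD`. -/
def surfMeasure {N : ℕ} (D : Set (EN N)) : Measure (EN N) :=
  (Measure.hausdorffMeasure (2 * (N:ℝ) - 1)).restrict (frontier D)

/-- The normalized surface measure on `bD`. -/
def surfMeasureNorm {N : ℕ} (D : Set (EN N)) : Measure (EN N) :=
  ((Measure.hausdorffMeasure (2 * (N:ℝ) - 1) : Measure (EN N)) (frontier D))⁻¹ • surfMeasure D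

/-- The set `𝒲((r_j))` of `f ∈ 𝒪(D)` such that every measurable function on `bD` is an
a.e. limit of `f ∘ γ(·, r_{j_k})` along some subsequence of `(r_j)`. -/
def WSet {N : ℕ} (D : Set (EN N)) (γ : EN N × ℝ → EN N) (r : ℕ → ℝ) : Set ↥(Hol D) :=
  {f | ∀ h : EN N → ℂ, Measurable h → ∃ φ : ℕ → ℕ, StrictMono φ ∧
    ∀ᵐ x ∂ surfMeasure D, Tendsto (fun k => f.1 (γ (x, r (φ k)))) atTop (𝓝 (h x))}

/-- `Γ` is a closed cap of a convex set `V`: the closure of a connected component of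
`V \ H` for some real affine hyperplane `H` (for convex `V`, a nonempty open half-space
slice of `V`). -/
def IsClosedCap {N : ℕ} (V : Set (EN N)) (Γ : Set (EN N)) : Prop :=
  ∃ (l : EN N →L[ℝ] ℝ) (c : ℝ), l ≠ 0 ∧ (V ∩ {z | c < l z}).Nonempty ∧
    Γ = closure (V ∩ {z | c < l z})

/-- `V` is a strictly convex domain: a bounded convex domain with `C²` boundary whose
defining function has positive definite real Hessian on the real tangent space. -/
def StrictlyConvexDomain {N : ℕ} (V : Set (EN N)) : Prop :=
  IsDomainSet V ∧ Bornology.IsBounded V ∧ Convex ℝ V ∧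
  ∃ (ρ : EN N → ℝ) (W : Set (EN N)), IsDefiningFunctionOn V ρ W ∧
    ∀ p ∈ frontier V, ∀ w : EN N, w ≠ 0 → fderiv ℝ ρ p w = 0 → 0 < Hess ρ p w w

/-- The defining function `‖z‖² - 1` of the unit ball. -/
def ballRho {N : ℕ} : EN N → ℝ := fun z => ‖z‖ ^ 2 - 1

/-- The normalized surface measure on the unit sphere of `ℂ^N`. -/
def sphMeasure (N : ℕ) : Measure (EN N) :=
  ((Measure.hausdorffMeasure (2 * (N:ℝ) - 1) : Measure (EN N)) (Metric.sphere 0 1))⁻¹ •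
    (Measure.hausdorffMeasure (2 * (N:ℝ) - 1)).restrict (Metric.sphere 0 1)

/-- `v` is a weight: increasing on `[0,∞)`, nonnegative, and tending to `∞`. -/
def IsWeight (v : ℝ → ℝ) : Prop :=
  (∀ x ∈ Ici (0:ℝ), 0 ≤ v x) ∧ MonotoneOn v (Ici 0) ∧ Tendsto v atTop atTop

/-- The norm `‖f‖ = sup_{z ∈ 𝔹_N} |f z| / v(|z|)` of `H_v^0`. -/
def hvNorm {N : ℕ} (v : ℝ → ℝ) (f : EN N → ℂ) : ℝ :=
  ⨆ z ∈ Metric.ball (0:EN N) 1, ‖f z‖ / v ‖z‖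

/-- Membership in `H_v^0`: `f` is holomorphic on `𝔹_N` and `sup_{|z|=r} |f z| / v(r) → 0`
as `r → 1⁻`. -/
def MemHv {N : ℕ} (v : ℝ → ℝ) (f : EN N → ℂ) : Prop :=
  DifferentiableOn ℂ f (Metric.ball 0 1) ∧
  Tendsto (fun r : ℝ => ⨆ z ∈ Metric.sphere (0:EN N) r, ‖f z‖ / v r) (𝓝[<] 1) (𝓝 0)

/-- `S` contains, relatively to `H_v^0` with its norm topology, a dense `G_δ` subset:
there are countably many relatively norm-open sets `U n` whose intersection with `H_v^0`
is norm-dense in `H_v^0` and contained in `S`. -/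
def ResidualInHv {N : ℕ} (v : ℝ → ℝ) (S : Set (EN N → ℂ)) : Prop :=
  ∃ U : ℕ → Set (EN N → ℂ),
    (∀ n, ∀ f, MemHv v f → f ∈ U n →
      ∃ δ > 0, ∀ g, MemHv v g → hvNorm v (g - f) < δ → g ∈ U n) ∧
    (∀ f, MemHv v f → ∀ δ > 0, ∃ g, MemHv v g ∧ (∀ n, g ∈ U n) ∧ hvNorm v (g - f) < δ) ∧
    ∀ f, MemHv v f → (∀ n, f ∈ U n) → f ∈ S

/-- `S` is densely lineable in `H_v^0`: `S ∪ {0}` contains a norm-dense subspace of `H_v^0`. -/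
def DenselyLineableInHv {N : ℕ} (v : ℝ → ℝ) (S : Set (EN N → ℂ)) : Prop :=
  ∃ p : Submodule ℂ (EN N → ℂ), (↑p ⊆ {f : EN N → ℂ | MemHv v f}) ∧ (↑p ⊆ S ∪ {0}) ∧
    ∀ f, MemHv v f → ∀ δ > 0, ∃ g ∈ p, hvNorm v (g - f) < δ

/-- `S` is spaceable in `H_v^0`: `S ∪ {0}` contains a norm-closed infinite-dimensional
subspace of `H_v^0`. -/
def SpaceableInHv {N : ℕ} (v : ℝ → ℝ) (S : Set (EN N → ℂ)) : Prop :=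
  ∃ p : Submodule ℂ (EN N → ℂ), (↑p ⊆ {f : EN N → ℂ | MemHv v f}) ∧ (↑p ⊆ S ∪ {0}) ∧
    ¬ Module.Finite ℂ ↥p ∧
    ∀ f, MemHv v f → (∀ δ > 0, ∃ g ∈ p, hvNorm v (g - f) < δ) → f ∈ p

/-- The standing assumptions on the family `{γ_z : z ∈ 𝔹_N}`: each `γ_z` is a `C¹` map
`b𝔹_N × [0,1] → cl 𝔹_N` into `𝔹_N` for `r < 1` with `γ_z(x,1) = x`, transversal approach
and (†), with joint continuity of `(z,x,r) ↦ γ_z(x,r)` and of `(z,r) ↦ ∂γ_z(x,r)/∂r`. -/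
def BallGammaFamily {N : ℕ} (γ : EN N → EN N × ℝ → EN N) : Prop :=
  (∀ z ∈ Metric.ball (0:EN N) 1,
    GammaMap (Metric.ball 0 1) ballRho (γ z) 1 ∧ Dagger (Metric.ball 0 1) ballRho (γ z)) ∧
  ContinuousOn (fun p : EN N × (EN N × ℝ) => γ p.1 p.2)
    (Metric.ball 0 1 ×ˢ (Metric.sphere 0 1 ×ˢ Icc (0:ℝ) 1)) ∧
  ∀ x ∈ Metric.sphere (0:EN N) 1,
    ContinuousOn (fun p : EN N × ℝ => derivWithin (fun r => γ p.1 (x, r)) (Icc (0:ℝ) 1) p.2)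
      (Metric.ball 0 1 ×ˢ Icc (0:ℝ) 1)

/-- The set of `f` such that for every `z ∈ 𝔹_N`, every measurable function on `b𝔹_N` is an
a.e. limit of `f ∘ γ_z(·, r_{j_k})` along some subsequence of `(r_j)`. -/
def WSetHv {N : ℕ} (γ : EN N → EN N × ℝ → EN N) (r : ℕ → ℝ) : Set (EN N → ℂ) :=
  {f | ∀ z ∈ Metric.ball (0:EN N) 1, ∀ h : EN N → ℂ, Measurable h →
    ∃ φ : ℕ → ℕ, StrictMono φ ∧
      ∀ᵐ x ∂ sphMeasure N, Tendsto (fun k => f (γ z (x, r (φ k)))) atTop (𝓝 (h x))}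

/-- The set `E_L^* = {γ_z(x,r) : x ∈ E, r ∈ [0,1], z ∈ L}`. -/
def EStarSet {N : ℕ} (γ : EN N → EN N × ℝ → EN N) (L E : Set (EN N)) : Set (EN N) :=
  {w | ∃ z ∈ L, ∃ x ∈ E, ∃ r ∈ Icc (0:ℝ) 1, w = γ z (x, r)}

/-- The Korányi approach region `D_α(x)`. -/
def Koranyi {N : ℕ} (α : ℝ) (x : EN N) : Set (EN N) :=
  {z ∈ Metric.ball (0:EN N) 1 | ‖1 - (⟪x, z⟫_ℂ : ℂ)‖ < α / 2 * (1 - ‖z‖ ^ 2)}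

/-- `h` has a `K`-limit at `x`: for every `α > 1` the values of `h` converge along every
sequence in `D_α(x)` converging to `x`. -/
def HasKLimitAt {N : ℕ} (h : EN N → ℂ) (x : EN N) : Prop :=
  ∀ α > (1:ℝ), ∃ c : ℂ, ∀ z : ℕ → EN N, (∀ i, z i ∈ Koranyi α x) →
    Tendsto z atTop (𝓝 x) → Tendsto (fun i => h (z i)) atTop (𝓝 c)

/-- The circle `bL_x = L_x ∩ b𝔹_N` cut out on the complex line through `x` and `0`. -/
def lineCircle {N : ℕ} (x : EN N) : Set (EN N) :=
  {z | ∃ t : ℂ, z = t • x} ∩ Metric.sphere 0 1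

end

/-!
Finitely many holomorphic functions give a map `f : D → ℝ^ι` by real parts for which `∑ i, f i ^ 2`
is small on `closure (D' n)` and large on the boundary of `D' (n + 1)`. The compact set `Γ n` is the
preimage of a maze in the spherical shell between the two values.

Each wall of the maze lies on the boundary of a convex polyhedron whose facets are tangent to a
paraboloid over the points of a grid; removing small neighbourhoods of the ridges splits it into
flat panels. A panel is cut out by (in)equalities between real parts of holomorphic functions, and
the affine function of its facet separates it from everything it encloses and from the other panels
of the wall. Adding the panels one at a time therefore preserves `𝒪(D)`-convexity: for two convex
compact sets separated by `re h`, Runge approximation of the indicator of a half-plane, composed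
with `h`, yields holomorphic functions close to `1` on one set and to `0` on the other.

The grid moves by `1 / q` from one wall to the next. A path through `q > card ι` consecutive walls
passes two of them through cracks of the same coordinate, and these cracks are at distance at least
`1 / (2 * q)`. Multiplying `f` by `q * R` makes room for `R ^ 2` such blocks of walls, while the
Lipschitz constant of `f` grows only like `R`, so that long paths are forced when `R` is large.
-/


section HalfPlaneRunge

variable {A : Type*} [NormedRing A] [NormedAlgebra ℂ A] [CompleteSpace A]

/-- Spectra only grow by filling bounded holes, and the imaginary axis lies in no hole. -/
theorem re_ne_zero_of_mem_spectrum_subalgebra {B : Subalgebra ℂ A}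
    (hB : IsClosed (B : Set A)) {x : B} (hx : ∀ z ∈ spectrum ℂ (x : A), z.re ≠ 0) {z : ℂ}
    (hz : z ∈ spectrum ℂ x) : z.re ≠ 0 := by
  intro hz0
  have : IsClosed (B : Set A) := hB
  let axis : Set ℂ := {w | w.re = 0}
  have axis_connected : IsPreconnected axis :=
    ((convex_singleton (0 : ℝ)).linear_preimage Complex.reLm).isPreconnected
  have axis_subset : axis ⊆ connectedComponentIn (spectrum ℂ (x : A))ᶜ z :=
    axis_connected.subset_connectedComponentIn hz0 fun w hw hw' ↦ hx w hw' hw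
  obtain ⟨C, hC⟩ := isBounded_iff_forall_norm_le.1
    ((Subalgebra.spectrum_isBounded_connectedComponentIn B x hz).subset axis_subset)
  have := hC ((|C| + 1 : ℝ) * Complex.I) (by simp [axis])
  rw [norm_mul, Complex.norm_I, mul_one, Complex.norm_real, Real.norm_eq_abs,
    abs_of_nonneg (by positivity)] at this
  linarith [le_abs_self C]

theorem isUnit_one_add_exp {B : Type*} [NormedCommRing B] [NormedAlgebra ℂ B] [CompleteSpace B]
    {x : B} (hx : ∀ z ∈ spectrum ℂ x, z.re ≠ 0) : IsUnit (1 + NormedSpace.exp x) := by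
  rw [← spectrum.zero_notMem_iff ℂ, WeakDual.CharacterSpace.mem_spectrum_iff_exists]
  rintro ⟨χ, hχ⟩
  have : Complex.exp (χ x) = -1 := by
    let : NormedAlgebra ℚ B := NormedAlgebra.restrictScalars ℚ ℂ B
    rw [map_add, map_one, NormedSpace.map_exp χ (map_continuous χ), ← Complex.exp_eq_exp_ℂ] at hχ
    linear_combination hχ
  refine hx _ (WeakDual.CharacterSpace.mem_spectrum_iff_exists.2 ⟨χ, rfl⟩) ?_
  simpa [Complex.norm_exp] using congrArg norm this

theorem exists_polynomial_near_inv_one_add_exp {S : Set ℂ} (hS : IsCompact S)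
    (hre : ∀ ζ ∈ S, ζ.re ≠ 0) {t : ℝ} (ht : t ≠ 0) {ε : ℝ} (hε : 0 < ε) :
    ∃ P : Polynomial ℂ, ∀ ζ ∈ S, ‖P.eval ζ - (1 + Complex.exp (t * ζ))⁻¹‖ < ε := by
  have := isCompact_iff_compactSpace.1 hS
  let B := (polynomialFunctions S).topologicalClosure
  have hB : IsClosed (B : Set C(S, ℂ)) := Subalgebra.isClosed_topologicalClosure _
  have : CompleteSpace B := hB.completeSpace_coe
  let f : C(S, ℂ) := ((t : ℂ) • Polynomial.X : Polynomial ℂ).toContinuousMapOn S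
  let x : B := ⟨f, subset_closure ⟨_, trivial, rfl⟩⟩
  have hf : ∀ z ∈ spectrum ℂ f, z.re ≠ 0 := by
    rw [ContinuousMap.spectrum_eq_range]
    rintro _ ⟨ζ, rfl⟩
    simpa [f, ht] using hre ζ ζ.2
  obtain ⟨u, hu⟩ := isUnit_one_add_exp (x := x) fun z ↦ re_ne_zero_of_mem_spectrum_subalgebra hB hf
  have hval (ζ : S) : (u⁻¹.1.1 : C(S, ℂ)) ζ = (1 + Complex.exp (t * ζ))⁻¹ := by
    let χ : B →ₐ[ℂ] ℂ := (ContinuousMap.evalAlgHom ℂ ℂ ζ).comp B.val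
    have hχ : Continuous χ := (continuous_eval_const ζ).comp continuous_subtype_val
    have hχu : χ u = 1 + Complex.exp (t * ζ) := by
      let : NormedAlgebra ℚ B := NormedAlgebra.restrictScalars ℚ ℂ B
      rw [hu, map_add, map_one, NormedSpace.map_exp χ hχ, ← Complex.exp_eq_exp_ℂ]
      simp [χ, x, f]
    refine eq_inv_of_mul_eq_one_left ?_
    rw [← hχu]
    exact (map_mul χ u⁻¹.1 u).symm.trans (by rw [Units.inv_mul, map_one])
  obtain ⟨_, ⟨P, -, rfl⟩, hP⟩ := Metric.mem_closure_iff.1 u⁻¹.1.2 ε hε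
  refine ⟨P, fun ζ hζ ↦ ?_⟩
  rw [← hval ⟨ζ, hζ⟩, ← dist_eq_norm, dist_comm]
  exact (ContinuousMap.dist_apply_le_dist ⟨ζ, hζ⟩).trans_lt hP

theorem norm_inv_one_add_exp_le {s : ℝ} (hs : 0 < s) {z : ℂ} (hz : s ≤ z.re) :
    ‖(1 + Complex.exp z)⁻¹‖ ≤ (Real.exp s - 1)⁻¹ := by
  rw [norm_inv]
  refine inv_anti₀ (sub_pos.2 (Real.one_lt_exp_iff.2 hs)) ?_
  calc Real.exp s - 1 ≤ Real.exp z.re - 1 := by gcongr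
    _ = ‖Complex.exp z‖ - ‖(1 : ℂ)‖ := by rw [Complex.norm_exp, norm_one]
    _ ≤ ‖1 + Complex.exp z‖ := by simpa [add_comm] using norm_sub_le_norm_add (Complex.exp z) 1

theorem inv_one_add_exp_neg {z : ℂ} (hz : z.re ≠ 0) :
    (1 + Complex.exp (-z))⁻¹ = 1 - (1 + Complex.exp z)⁻¹ := by
  have hz' : Complex.exp z + 1 ≠ 0 := fun h ↦ hz <| by
    simpa [Complex.norm_exp] using congrArg norm (eq_neg_of_add_eq_zero_left h)
  rw [Complex.exp_neg, add_comm 1 (Complex.exp z)]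
  field_simp [Complex.exp_ne_zero z]
  ring

theorem exists_polynomial_near_indicator {S : Set ℂ} (hS : IsCompact S)
    (hre : ∀ ζ ∈ S, ζ.re ≠ 0) {ε : ℝ} (hε : 0 < ε) :
    ∃ P : Polynomial ℂ, ∀ ζ ∈ S,
      (ζ.re < 0 → ‖P.eval ζ - 1‖ < ε) ∧ (0 < ζ.re → ‖P.eval ζ‖ < ε) := by
  obtain ⟨δ, hδ, hδS⟩ := hS.exists_forall_le' (f := fun ζ ↦ |ζ.re|) (a := 0) (by fun_prop)
    fun ζ hζ ↦ abs_pos.2 (hre ζ hζ)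
  obtain ⟨t, ht, htε⟩ : ∃ t > 0, (Real.exp (t * δ) - 1)⁻¹ < ε / 2 := by
    have : Tendsto (fun t ↦ (Real.exp (t * δ) - 1)⁻¹) atTop (𝓝 0) :=
      (tendsto_atTop_add_const_right _ _ <|
        Real.tendsto_exp_atTop.comp <| tendsto_id.atTop_mul_const hδ).inv_tendsto_atTop
    exact ((eventually_gt_atTop 0).and (this.eventually_lt_const (half_pos hε))).exists
  obtain ⟨P, hP⟩ := exists_polynomial_near_inv_one_add_exp hS hre ht.ne' (half_pos hε)
  have hlarge (z : ℂ) (hz : δ ≤ z.re) : ‖(1 + Complex.exp (t * z))⁻¹‖ < ε / 2 := by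
    refine (norm_inv_one_add_exp_le (mul_pos ht hδ) ?_).trans_lt htε
    rw [Complex.re_ofReal_mul]
    gcongr
  refine ⟨P, fun ζ hζ ↦ ⟨fun hneg ↦ ?_, fun hpos ↦ ?_⟩⟩
  · have hflip : ‖(1 + Complex.exp (t * ζ))⁻¹ - 1‖ < ε / 2 := by
      rw [norm_sub_rev, ← inv_one_add_exp_neg (by simp [ht.ne', hneg.ne]), ← mul_neg]
      exact hlarge _ ((hδS ζ hζ).trans_eq (abs_of_neg hneg))
    linarith [norm_sub_le_norm_sub_add_norm_sub (P.eval ζ) (1 + Complex.exp (t * ζ))⁻¹ 1, hP ζ hζ]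
  · have := hlarge ζ ((hδS ζ hζ).trans_eq (abs_of_pos hpos))
    linarith [norm_le_norm_add_norm_sub' (P.eval ζ) (1 + Complex.exp (t * ζ))⁻¹, hP ζ hζ]

end HalfPlaneRunge

section HolomorphicConvexity

variable {E : Type*} [NormedAddCommGroup E] [NormedSpace ℂ E] {D A B K : Set E}

/-- `K` is a compact `𝒪(D)`-convex set. Strict separation at each point replaces the comparison
with a supremum, so that no boundedness side conditions arise. -/
structure IsHolConvex (D K : Set E) : Prop where
  isCompact : IsCompact K
  subset : K ⊆ D
  exists_norm_lt : ∀ z ∈ D \ K, ∃ φ : E → ℂ, DifferentiableOn ℂ φ D ∧ ∀ w ∈ K, ‖φ w‖ < ‖φ z‖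

namespace IsHolConvex

theorem exists_eq_one_norm_lt (hK : IsHolConvex D K) {z : E} (hz : z ∈ D \ K) {ε : ℝ}
    (hε : 0 < ε) :
    ∃ φ : E → ℂ, DifferentiableOn ℂ φ D ∧ φ z = 1 ∧ ∀ w ∈ K, ‖φ w‖ < ε := by
  obtain rfl | hne := K.eq_empty_or_nonempty
  · exact ⟨fun _ ↦ 1, differentiableOn_const 1, rfl, by simp⟩
  obtain ⟨φ, hφ, hlt⟩ := hK.exists_norm_lt z hz
  obtain ⟨w₀, hw₀, hmax⟩ := hK.isCompact.exists_isMaxOn hne (hφ.continuousOn.mono hK.subset).norm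
  have hpos : 0 < ‖φ z‖ := (norm_nonneg _).trans_lt (hlt w₀ hw₀)
  obtain ⟨n, hn⟩ := exists_pow_lt_of_lt_one hε ((div_lt_one hpos).2 (hlt w₀ hw₀))
  refine ⟨fun w ↦ ((φ z)⁻¹ * φ w) ^ n, (hφ.const_mul _).pow n, ?_, fun w hw ↦ ?_⟩
  · simp [norm_pos_iff.1 hpos]
  · rw [norm_pow, norm_mul, norm_inv, inv_mul_eq_div]
    refine lt_of_le_of_lt ?_ hn
    gcongr
    exact hmax hw

theorem empty : IsHolConvex D ∅ :=
  ⟨isCompact_empty, empty_subset D, fun _ _ ↦ ⟨0, differentiableOn_const 0, by simp⟩⟩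

theorem sep_re_le (hK : IsHolConvex D K) {ι : Type*} {h : ι → E → ℂ}
    (hh : ∀ i, DifferentiableOn ℂ (h i) D) (c : ι → ℝ) :
    IsHolConvex D {z ∈ K | ∀ i, (h i z).re ≤ c i} where
  isCompact := by
    have hcont : ContinuousOn (fun z i ↦ (h i z).re) K := continuousOn_pi.2 fun i ↦
      Complex.continuous_re.comp_continuousOn ((hh i).continuousOn.mono hK.subset)
    exact hK.isCompact.of_isClosed_subset
      (hK.isCompact.isClosed.isClosed_le hcont continuousOn_const) (sep_subset K _)
  subset := (sep_subset K _).trans hK.subset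
  exists_norm_lt z hz := by
    by_cases hzK : z ∈ K
    · obtain ⟨i, hi⟩ : ∃ i, c i < (h i z).re := by
        by_contra! hle
        exact hz.2 ⟨hzK, hle⟩
      refine ⟨fun w ↦ Complex.exp (h i w), (hh i).cexp, fun w hw ↦ ?_⟩
      simpa [Complex.norm_exp] using (hw.2 i).trans_lt hi
    · obtain ⟨φ, hφ, hlt⟩ := hK.exists_norm_lt z ⟨hz.1, hzK⟩
      exact ⟨φ, hφ, fun w hw ↦ hlt w hw.1⟩

theorem sep_re_mem_Icc (hK : IsHolConvex D K) {ι : Type*} {h : ι → E → ℂ}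
    (hh : ∀ i, DifferentiableOn ℂ (h i) D) (a b : ι → ℝ) :
    IsHolConvex D {z ∈ K | ∀ i, (h i z).re ∈ Icc (a i) (b i)} := by
  convert (hK.sep_re_le (fun i ↦ (hh i).neg) (-a)).sep_re_le hh b using 1
  ext z
  simp [and_assoc, forall_and]

end IsHolConvex

theorem exists_differentiableOn_near_indicator {h : E → ℂ} (hh : DifferentiableOn ℂ h D)
    (hA : IsCompact A) (hAD : A ⊆ D) (hB : IsCompact B) (hBD : B ⊆ D) {c : ℝ}
    (hAc : ∀ w ∈ A, (h w).re < c) (hBc : ∀ w ∈ B, c < (h w).re) {ε : ℝ} (hε : 0 < ε) :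
    ∃ g : E → ℂ, DifferentiableOn ℂ g D ∧ (∀ w ∈ A, ‖g w - 1‖ < ε) ∧ ∀ w ∈ B, ‖g w‖ < ε := by
  have hS : IsCompact ((fun w ↦ h w - c) '' (A ∪ B)) :=
    (hA.union hB).image_of_continuousOn <|
      (hh.continuousOn.mono (union_subset hAD hBD)).sub continuousOn_const
  obtain ⟨P, hP⟩ := exists_polynomial_near_indicator hS (by
    rintro _ ⟨w, hw | hw, rfl⟩
    · simpa using (sub_neg.2 (hAc w hw)).ne
    · simpa using (sub_pos.2 (hBc w hw)).ne') hε
  refine ⟨fun w ↦ P.eval (h w - c), P.differentiable.comp_differentiableOn (hh.sub_const _),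
    fun w hw ↦ ?_, fun w hw ↦ ?_⟩
  · exact (hP _ (mem_image_of_mem _ (Or.inl hw))).1 (by simpa using hAc w hw)
  · exact (hP _ (mem_image_of_mem _ (Or.inr hw))).2 (by simpa using hBc w hw)

namespace IsHolConvex

theorem exists_norm_lt_of_re_le (hA : IsHolConvex D A) (hB : IsCompact B) (hBD : B ⊆ D)
    {h : E → ℂ} (hh : DifferentiableOn ℂ h D) {c : ℝ} (hAc : ∀ w ∈ A, (h w).re ≤ c)
    (hBc : ∀ w ∈ B, c < (h w).re) {z : E} (hz : z ∈ D \ A) (hzc : (h z).re ≤ c) :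
    ∃ φ : E → ℂ, DifferentiableOn ℂ φ D ∧ ∀ w ∈ A ∪ B, ‖φ w‖ < ‖φ z‖ := by
  obtain ⟨φ, hφ, hφz, hφA⟩ := hA.exists_eq_one_norm_lt hz (ε := 1 / 4) (by norm_num)
  obtain ⟨b, hφB⟩ := hB.exists_bound_of_continuousOn (hφ.continuousOn.mono hBD)
  obtain ⟨c', hcc', hBc'⟩ := hB.exists_forall_le'
    (Complex.continuous_re.comp_continuousOn (hh.continuousOn.mono hBD)) hBc
  have hε : 0 < 1 / (4 * (|b| + 1)) := by positivity
  obtain ⟨g, hg, hgA, hgB⟩ := exists_differentiableOn_near_indicator hh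
    (hA.isCompact.insert z) (insert_subset hz.1 hA.subset) hB hBD (c := (c + c') / 2)
    (forall_mem_insert.2 ⟨by linarith, fun w hw ↦ by linarith [hAc w hw]⟩)
    (fun w hw ↦ lt_of_lt_of_le (by linarith) (hBc' w hw)) hε
  have hε4 : 1 / (4 * (|b| + 1)) ≤ 1 / 4 := by gcongr; linarith [abs_nonneg b]
  have hgz : 3 / 4 ≤ ‖g z‖ := by
    linarith [hgA z (mem_insert z A), norm_sub_norm_le 1 (g z), norm_sub_rev 1 (g z),
      norm_one (α := ℂ)]
  refine ⟨fun w ↦ φ w * g w, hφ.mul hg, ?_⟩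
  rintro w (hw | hw) <;> rw [norm_mul, norm_mul, hφz, norm_one, one_mul]
  · have : ‖g w‖ ≤ 5 / 4 := by
      linarith [hgA w (mem_insert_of_mem z hw), norm_sub_norm_le (g w) 1, norm_one (α := ℂ)]
    have := mul_le_mul (hφA w hw).le this (norm_nonneg _) (by norm_num)
    linarith
  · have : ‖φ w‖ * ‖g w‖ ≤ (|b| + 1) * (1 / (4 * (|b| + 1))) :=
      mul_le_mul (by linarith [hφB w hw, le_abs_self b]) (hgB w hw).le (norm_nonneg _)
        (by positivity)
    have : (|b| + 1) * (1 / (4 * (|b| + 1))) = 1 / 4 := by field_simp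
    linarith

theorem union (hA : IsHolConvex D A) (hB : IsHolConvex D B) {h : E → ℂ}
    (hh : DifferentiableOn ℂ h D) {c : ℝ} (hAc : ∀ w ∈ A, (h w).re < c)
    (hBc : ∀ w ∈ B, c < (h w).re) : IsHolConvex D (A ∪ B) where
  isCompact := hA.isCompact.union hB.isCompact
  subset := union_subset hA.subset hB.subset
  exists_norm_lt z hz := by
    obtain hzc | hzc := le_total (h z).re c
    · exact hA.exists_norm_lt_of_re_le hB.isCompact hB.subset hh (fun w hw ↦ (hAc w hw).le) hBc
        ⟨hz.1, fun h ↦ hz.2 (Or.inl h)⟩ hzc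
    · rw [union_comm]
      exact hB.exists_norm_lt_of_re_le hA.isCompact hA.subset hh.neg (c := -c)
        (fun w hw ↦ by simpa using (hBc w hw).le) (fun w hw ↦ by simpa using hAc w hw)
        ⟨hz.1, fun h ↦ hz.2 (Or.inr h)⟩ (by simpa using hzc)

theorem union_biUnion {κ : Type*} {W : κ → Set E} {s : Finset κ} (hA : IsHolConvex D A)
    (hW : ∀ n ∈ s, IsHolConvex D (W n)) {h : κ → E → ℂ} {c : ℝ}
    (hh : ∀ n ∈ s, DifferentiableOn ℂ (h n) D) (hAc : ∀ n ∈ s, ∀ w ∈ A, (h n w).re < c)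
    (hlt : ∀ n ∈ s, ∀ m ∈ s, m ≠ n → ∀ w ∈ W m, (h n w).re < c)
    (hgt : ∀ n ∈ s, ∀ w ∈ W n, c < (h n w).re) :
    IsHolConvex D (A ∪ ⋃ n ∈ s, W n) := by
  classical
  induction s using Finset.induction_on with
  | empty => simpa using hA
  | insert a s ha ih =>
    rw [Finset.set_biUnion_insert, union_comm (W a), ← union_assoc]
    simp only [Finset.forall_mem_insert] at hW hh hAc hlt hgt
    refine (ih hW.2 hh.2 hAc.2 (fun n hn ↦ (hlt.2 n hn).2) hgt.2).union hW.1 hh.1 ?_ hgt.1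
    rintro w (hw | hw)
    · exact hAc.1 w hw
    · obtain ⟨m, hm, hwm⟩ := mem_iUnion₂.1 hw
      exact hlt.1.2 m hm (ne_of_mem_of_not_mem hm ha) w hwm

end IsHolConvex

theorem isHolConvex_iff {N : ℕ} {D K : Set (EN N)} :
    IsHolConvex D K ↔ IsCompact K ∧ HolConvexIn D K := by
  have norm_le_iSup {φ : EN N → ℂ} (hφ : DifferentiableOn ℂ φ D) (hK : IsCompact K) (hKD : K ⊆ D)
      {w : EN N} (hw : w ∈ K) : ‖φ w‖ ≤ ⨆ w ∈ K, ‖φ w‖ := by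
    obtain ⟨C, hC⟩ := hK.exists_bound_of_continuousOn (hφ.continuousOn.mono hKD)
    refine le_ciSup₂ (f := fun w (_ : w ∈ K) ↦ ‖φ w‖) ⟨C, ?_⟩ w hw
    rintro _ ⟨_, ⟨w, rfl⟩, hw, rfl⟩
    exact hC w hw
  refine ⟨fun h ↦ ⟨h.isCompact, h.subset, Subset.antisymm (fun z hz ↦ ?_) fun z hz ↦ ?_⟩,
    fun ⟨hK, hKD, hhull⟩ ↦ ⟨hK, hKD, fun z hz ↦ ?_⟩⟩
  · by_contra hzK
    obtain ⟨φ, hφ, hφz, hlt⟩ := h.exists_eq_one_norm_lt ⟨hz.1, hzK⟩ (ε := 1 / 2) (by norm_num)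
    have : ⨆ w ∈ K, ‖φ w‖ ≤ 1 / 2 :=
      Real.iSup_le (fun w ↦ Real.iSup_le (fun hw ↦ (hlt w hw).le) (by norm_num)) (by norm_num)
    have := hz.2 φ hφ
    rw [hφz, norm_one] at this
    linarith
  · exact ⟨h.subset hz, fun φ hφ ↦ norm_le_iSup hφ h.isCompact h.subset hz⟩
  · obtain ⟨φ, hφ, hlt⟩ : ∃ φ : EN N → ℂ, DifferentiableOn ℂ φ D ∧ ⨆ w ∈ K, ‖φ w‖ < ‖φ z‖ := by
      by_contra! hle
      exact hz.2 (hhull ▸ ⟨hz.1, hle⟩)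
    exact ⟨φ, hφ, fun w hw ↦ (norm_le_iSup hφ hK hKD hw).trans_lt hlt⟩

end HolomorphicConvexity

section Maze

variable {ι : Type*} [Fintype ι]

/-- The affine function that is tangent to `x ↦ ∑ i, x i ^ 2` at `p`. -/
def tangent (p x : ι → ℝ) : ℝ := ∑ i, (2 * p i * x i - p i ^ 2)

/-- The maximum of the tangents of `x ↦ ∑ i, x i ^ 2` at the points of the grid `θ + ℤ^ι`. The
subtracted norm on `ℝ / ℤ` is the distance from `x i` to `θ + ℤ`, see `facetFun_eq_tangent`. -/
noncomputable def facetFun (θ : ℝ) (x : ι → ℝ) : ℝ :=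
  ∑ i, (x i ^ 2 - ‖((x i - θ : ℝ) : UnitAddCircle)‖ ^ 2)

/-- The part of a facet of the convex polyhedron `facetFun ≤ s` (tangent at `p`) on which every
coordinate is within `r` of `p`. -/
def panel (p : ι → ℝ) (r s : ℝ) : Set (ι → ℝ) := {x | (∀ i, |x i - p i| ≤ r) ∧ tangent p x = s}

/-- The level set `facetFun θ = s` with the `η`-neighbourhoods of its ridges (where some `x i` is
half-way between two points of `θ + ℤ`) removed. It is a disjoint union of panels. -/
def shell (θ η s : ℝ) : Set (ι → ℝ) :=
  {x | facetFun θ x = s ∧ ∀ i, ‖((x i - θ : ℝ) : UnitAddCircle)‖ ≤ 1 / 2 - η}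

theorem tangent_eq (p x : ι → ℝ) : tangent p x = ∑ i, (x i ^ 2 - (x i - p i) ^ 2) :=
  Finset.sum_congr rfl fun _ _ ↦ by ring

theorem tangent_le_sum_sq (p x : ι → ℝ) : tangent p x ≤ ∑ i, x i ^ 2 := by
  rw [tangent_eq]
  exact Finset.sum_le_sum fun i _ ↦ sub_le_self _ (sq_nonneg _)

theorem facetFun_le_sum_sq (θ : ℝ) (x : ι → ℝ) : facetFun θ x ≤ ∑ i, x i ^ 2 :=
  Finset.sum_le_sum fun _ _ ↦ sub_le_self _ (sq_nonneg _)

theorem norm_unitAddCircle_le_half (u : UnitAddCircle) : ‖u‖ ≤ 1 / 2 := by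
  simpa using AddCircle.norm_le_half_period 1 one_ne_zero (x := u)

theorem sum_sq_le_facetFun_add (θ : ℝ) (x : ι → ℝ) :
    ∑ i, x i ^ 2 ≤ facetFun θ x + Fintype.card ι / 4 := by
  have : ∑ i, x i ^ 2 ≤ ∑ i, (x i ^ 2 - ‖((x i - θ : ℝ) : UnitAddCircle)‖ ^ 2 + 1 / 4) := by
    gcongr with i
    nlinarith [norm_unitAddCircle_le_half ((x i - θ : ℝ) : UnitAddCircle),
      norm_nonneg ((x i - θ : ℝ) : UnitAddCircle)]
  simpa [facetFun, Finset.sum_add_distrib, div_eq_mul_inv] using this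

theorem norm_coe_eq_abs_sub_intCast {u : ℝ} {n : ℤ} (h : |u - n| ≤ 1 / 2) :
    ‖(u : UnitAddCircle)‖ = |u - n| := by
  have : ((u - n : ℝ) : UnitAddCircle) = u := by simp
  rw [← this, AddCircle.norm_coe_eq_abs_iff 1 one_ne_zero]
  simpa using h

theorem continuous_facetFun (θ : ℝ) : Continuous (facetFun θ : (ι → ℝ) → ℝ) := by
  have (i : ι) : Continuous fun x : ι → ℝ ↦ ((x i - θ : ℝ) : UnitAddCircle) :=
    (AddCircle.continuous_mk' 1).comp (by fun_prop)
  unfold facetFun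
  fun_prop

theorem facetFun_eq_tangent {θ : ℝ} {n : ι → ℤ} {x : ι → ℝ}
    (h : ∀ i, |x i - (θ + n i)| ≤ 1 / 2) : facetFun θ x = tangent (fun i ↦ θ + n i) x := by
  rw [tangent_eq]
  refine Finset.sum_congr rfl fun i _ ↦ ?_
  rw [norm_coe_eq_abs_sub_intCast (by rw [sub_sub]; exact h i), sq_abs, sub_sub]

theorem mem_shell_iff {θ η s : ℝ} (hη : 0 ≤ η) {x : ι → ℝ} :
    x ∈ shell θ η s ↔ ∃ n : ι → ℤ, x ∈ panel (fun i ↦ θ + n i) (1 / 2 - η) s := by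
  constructor
  · rintro ⟨hs, hx⟩
    have hround (i : ι) : |x i - (θ + round (x i - θ))| ≤ 1 / 2 - η := by
      simpa only [UnitAddCircle.norm_eq, sub_sub] using hx i
    refine ⟨fun i ↦ round (x i - θ), hround, ?_⟩
    rw [← facetFun_eq_tangent fun i ↦ (hround i).trans (sub_le_self _ hη), hs]
  · rintro ⟨n, hx, hs⟩
    have hhalf (i : ι) : |x i - (θ + n i)| ≤ 1 / 2 := (hx i).trans (sub_le_self _ hη)
    refine ⟨(facetFun_eq_tangent hhalf).trans hs, fun i ↦ ?_⟩
    rw [norm_coe_eq_abs_sub_intCast (n := n i) (by simpa only [sub_sub] using hhalf i), sub_sub]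
    exact hx i

theorem sq_add_le_sub_intCast_sq {η y : ℝ} (hη : 0 ≤ η) (hy : |y| ≤ 1 / 2 - η) {k : ℤ}
    (hk : k ≠ 0) : y ^ 2 + 2 * η ≤ (y - k) ^ 2 := by
  have hk' : (1 : ℝ) ≤ |(k : ℝ)| := by exact_mod_cast Int.one_le_abs hk
  calc y ^ 2 + 2 * η ≤ y ^ 2 + |(k : ℝ)| * (|(k : ℝ)| - 2 * |y|) := by nlinarith
    _ = y ^ 2 + (k ^ 2 - 2 * |k * y|) := by rw [abs_mul, ← sq_abs (k : ℝ)]; ring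
    _ ≤ (y - k) ^ 2 := by nlinarith [le_abs_self (k * y)]

theorem tangent_le_of_mem_panel {θ η s : ℝ} (hη : 0 ≤ η) {n m : ι → ℤ} (hnm : n ≠ m)
    {x : ι → ℝ} (hx : x ∈ panel (fun i ↦ θ + m i) (1 / 2 - η) s) :
    tangent (fun i ↦ θ + n i) x ≤ s - 2 * η := by
  classical
  obtain ⟨j, hj⟩ := Function.ne_iff.1 hnm
  have hcoord (i : ι) : x i ^ 2 - (x i - (θ + n i)) ^ 2 ≤
      x i ^ 2 - (x i - (θ + m i)) ^ 2 - if i = j then 2 * η else 0 := by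
    obtain hnm | hnm := eq_or_ne (n i) (m i)
    · rw [if_neg (by rintro rfl; exact hj hnm), hnm, sub_zero]
    · have := sq_add_le_sub_intCast_sq hη (hx.1 i) (sub_ne_zero.2 hnm)
      rw [Int.cast_sub, show x i - (θ + m i) - (n i - m i) = x i - (θ + n i) by ring] at this
      split_ifs <;> linarith
  rw [← hx.2, tangent_eq, tangent_eq]
  refine (Finset.sum_le_sum fun i _ ↦ hcoord i).trans_eq ?_
  rw [Finset.sum_sub_distrib, Finset.sum_ite_eq' _ j, if_pos (Finset.mem_univ j)]

theorem finite_setOf_panel_inter_nonempty {S : Set (ι → ℝ)} (hS : Bornology.IsBounded S)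
    (θ r s : ℝ) : {n : ι → ℤ | (panel (fun i ↦ θ + n i) r s ∩ S).Nonempty}.Finite := by
  classical
  obtain ⟨R, hR⟩ := hS.exists_norm_le
  let C : ℤ := ⌈R + |θ| + r⌉
  refine (finite_Icc (fun _ ↦ -C) fun _ ↦ C).subset ?_
  rintro n ⟨x, hx, hxS⟩
  have hn (i : ι) : |n i| ≤ C := by
    have hnorm : |x i| ≤ R := (norm_le_pi_norm x i).trans (hR x hxS)
    have : |(n i : ℝ)| ≤ C := calc
      |(n i : ℝ)| = |x i - θ - (x i - (θ + n i))| := by ring_nf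
      _ ≤ |x i| + |θ| + |x i - (θ + n i)| := (abs_sub _ _).trans (by gcongr; exact abs_sub _ _)
      _ ≤ R + |θ| + r := by gcongr; exact hx.1 i
      _ ≤ C := Int.le_ceil _
    exact_mod_cast this
  exact ⟨fun i ↦ (abs_le.1 (hn i)).1, fun i ↦ (abs_le.1 (hn i)).2⟩

theorem exists_abs_sub_half_lt {η u : ℝ} (h : 1 / 2 - η < ‖(u : UnitAddCircle)‖) :
    ∃ k : ℤ, |u - k - 1 / 2| < η := by
  rw [UnitAddCircle.norm_eq] at h
  have := abs_sub_round u
  obtain hs | hs := le_total 0 (u - round u)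
  · refine ⟨round u, ?_⟩
    rw [abs_of_nonneg hs] at h this
    rw [abs_lt]
    constructor <;> linarith
  · refine ⟨round u - 1, ?_⟩
    rw [abs_of_nonpos hs] at h this
    push_cast
    rw [abs_lt]
    constructor <;> linarith

theorem norm_coe_sub_lt_of_half_sub_lt {η θ θ' x x' : ℝ}
    (h : 1 / 2 - η < ‖((x - θ : ℝ) : UnitAddCircle)‖)
    (h' : 1 / 2 - η < ‖((x' - θ' : ℝ) : UnitAddCircle)‖) :
    ‖((θ - θ' : ℝ) : UnitAddCircle)‖ < |x - x'| + 2 * η := by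
  obtain ⟨k, hk⟩ := exists_abs_sub_half_lt h
  obtain ⟨k', hk'⟩ := exists_abs_sub_half_lt h'
  calc ‖((θ - θ' : ℝ) : UnitAddCircle)‖ ≤ |θ - θ' - (k' - k : ℤ)| := by
        rw [UnitAddCircle.norm_eq]
        exact round_le _ _
    _ = |x - x' - (x - θ - k - 1 / 2) + (x' - θ' - k' - 1 / 2)| := by push_cast; ring_nf
    _ ≤ |x - x'| + |x - θ - k - 1 / 2| + |x' - θ' - k' - 1 / 2| :=
      (abs_add_le _ _).trans (by gcongr; exact abs_sub _ _)
    _ < |x - x'| + 2 * η := by linarith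

theorem inv_natCast_le_norm_coe_div {q : ℕ} {k : ℤ} (hk : ¬ (q : ℤ) ∣ k) :
    (q : ℝ)⁻¹ ≤ ‖((k / q : ℝ) : UnitAddCircle)‖ := by
  obtain rfl | hq := q.eq_zero_or_pos
  · simp
  have hne : k - q * round (k / q : ℝ) ≠ 0 := fun h ↦ hk ⟨_, sub_eq_zero.1 h⟩
  have hone : (1 : ℝ) ≤ |(k : ℝ) - q * (round (k / q : ℝ) : ℤ)| := by
    exact_mod_cast Int.one_le_abs hne
  rw [UnitAddCircle.norm_eq, inv_le_iff_one_le_mul₀' (by positivity)]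
  have hfactor : (k : ℝ) - q * (round (k / q : ℝ) : ℤ) = q * (k / q - (round (k / q : ℝ) : ℤ)) := by
    rw [mul_sub, mul_div_cancel₀ _ (by positivity)]
  rwa [hfactor, abs_mul, Nat.abs_cast] at hone

/-- The `l`-th wall of the maze around the ball `∑ i, x i ^ 2 ≤ e`. The grid is shifted by `1 / q`
from each wall to the next, so that in any `q` consecutive walls the removed neighbourhoods of the
ridges are pairwise far apart in each coordinate. -/
def mazeWall (q : ℕ) (e : ℝ) (l : ℕ) : Set (ι → ℝ) :=
  shell (l / q) (1 / (4 * q)) (e + q * (l + 1 / 2))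

theorem sum_sq_mem_Ioo_of_mem_mazeWall {q : ℕ} (hq : Fintype.card ι < q) {e : ℝ} {l : ℕ}
    {x : ι → ℝ} (hx : x ∈ mazeWall q e l) :
    ∑ i, x i ^ 2 ∈ Ioo (e + q * l) (e + q * (l + 1)) := by
  have hq' : (Fintype.card ι : ℝ) < q := by exact_mod_cast hq
  have hle := facetFun_le_sum_sq (l / q) x
  have hge := sum_sq_le_facetFun_add (l / q) x
  have hnonneg : (0 : ℝ) ≤ Fintype.card ι := by positivity
  rw [hx.1] at hle hge
  constructor <;> linarith

theorem exists_half_sub_lt_norm_of_notMem_mazeWall {q : ℕ} (hq : Fintype.card ι < q) {e : ℝ}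
    {l : ℕ} {γ : ℝ → ι → ℝ} {a b : ℝ} (hab : a ≤ b) (hγ : ContinuousOn γ (Icc a b))
    (ha : ∑ i, γ a i ^ 2 ≤ e + q * l) (hb : e + q * (l + 1) ≤ ∑ i, γ b i ^ 2)
    (hwall : ∀ t ∈ Icc a b, γ t ∉ mazeWall q e l) :
    ∃ t ∈ Icc a b, ∃ i, 1 / 2 - 1 / (4 * q) < ‖((γ t i - l / q : ℝ) : UnitAddCircle)‖ := by
  have hq' : (Fintype.card ι : ℝ) < q := by exact_mod_cast hq
  have hmem : e + q * (l + 1 / 2) ∈ Icc (facetFun (l / q) (γ a)) (facetFun (l / q) (γ b)) := by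
    have hle := facetFun_le_sum_sq (l / q) (γ a)
    have hge := sum_sq_le_facetFun_add (l / q) (γ b)
    constructor <;> linarith
  obtain ⟨t, ht, htl⟩ :=
    intermediate_value_Icc hab ((continuous_facetFun _).comp_continuousOn hγ) hmem
  have hcrack := hwall t ht
  simp only [mazeWall, shell, mem_ofPred_eq, not_and, not_forall, not_le] at hcrack
  exact ⟨t, ht, hcrack htl⟩

theorem le_eVariationOn_of_notMem_mazeWall_block {q : ℕ} (hq : Fintype.card ι < q) {e : ℝ} {k : ℕ}
    {γ : ℝ → ι → ℝ} {a b : ℝ} (hab : a ≤ b) (hγ : ContinuousOn γ (Icc a b))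
    (ha : ∑ i, γ a i ^ 2 ≤ e + q * k) (hb : e + q * (k + q) ≤ ∑ i, γ b i ^ 2)
    (hmaze : ∀ l, k ≤ l → l < k + q → ∀ t ∈ Icc a b, γ t ∉ mazeWall q e l) :
    ((1 / (2 * q) : ℝ≥0) : ℝ≥0∞) ≤ eVariationOn γ (Icc a b) := by
  have hcross (l : Fin q) : ∃ t ∈ Icc a b, ∃ i,
      1 / 2 - 1 / (4 * q) < ‖((γ t i - (k + l : ℕ) / q : ℝ) : UnitAddCircle)‖ := by
    have hl : (l : ℝ) + 1 ≤ q := by exact_mod_cast l.2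
    refine exists_half_sub_lt_norm_of_notMem_mazeWall hq hab hγ (ha.trans ?_) (hb.trans' ?_)
      (hmaze (k + l) (by omega) (by omega))
    · gcongr
      omega
    · push_cast
      rw [add_assoc (k : ℝ)]
      gcongr
  choose t ht i hi using hcross
  obtain ⟨l, l', hne, heq⟩ := Fintype.exists_ne_map_eq_of_card_lt i (by simpa using hq)
  have hdvd : ¬ (q : ℤ) ∣ (l - l' : ℤ) := fun h ↦ hne <| by
    have := Int.eq_zero_of_abs_lt_dvd h (by rw [abs_lt]; omega)
    omega
  have hfar : 1 / (2 * q) ≤ |γ (t l) (i l) - γ (t l') (i l)| := by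
    have hshift : ((k + l : ℕ) / q - (k + l' : ℕ) / q : ℝ) = ((l - l' : ℤ) : ℝ) / q := by
      push_cast; ring
    have hlt := norm_coe_sub_lt_of_half_sub_lt (hi l) (heq ▸ hi l')
    rw [hshift] at hlt
    have hhalf : (1 : ℝ) / (2 * q) = (q : ℝ)⁻¹ - 2 * (1 / (4 * q)) := by field_simp; norm_num
    linarith [inv_natCast_le_norm_coe_div hdvd]
  calc ((1 / (2 * q) : ℝ≥0) : ℝ≥0∞) ≤ edist (γ (t l)) (γ (t l')) := by
        rw [edist_nndist, ENNReal.coe_le_coe, ← NNReal.coe_le_coe]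
        push_cast
        exact hfar.trans (dist_le_pi_dist (γ (t l)) (γ (t l')) (i l))
    _ ≤ eVariationOn γ (Icc a b) := eVariationOn.edist_le γ (ht l) (ht l')

theorem le_eVariationOn_of_notMem_mazeWall {q : ℕ} (hq : Fintype.card ι < q) {e : ℝ} {m : ℕ}
    {γ : ℝ → ι → ℝ} {a b : ℝ} (hab : a ≤ b) (hγ : ContinuousOn γ (Icc a b))
    (ha : ∑ i, γ a i ^ 2 ≤ e) (hb : e + q * (q * m) ≤ ∑ i, γ b i ^ 2)
    (hmaze : ∀ l < q * m, ∀ t ∈ Icc a b, γ t ∉ mazeWall q e l) :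
    ((m * (1 / (2 * q)) : ℝ≥0) : ℝ≥0∞) ≤ eVariationOn γ (Icc a b) := by
  induction m generalizing b with
  | zero => simp
  | succ m ih =>
    have hcont : ContinuousOn (fun t ↦ ∑ i, γ t i ^ 2) (Icc a b) := by fun_prop
    push_cast at hb
    obtain ⟨t, ht, htm⟩ := intermediate_value_Icc hab hcont
      (show e + q * (q * m) ∈ Icc _ _ from
        ⟨ha.trans (le_add_of_nonneg_right (by positivity)), by nlinarith⟩)
    have hleft : Icc a t ⊆ Icc a b := Icc_subset_Icc_right ht.2
    have hright : Icc t b ⊆ Icc a b := Icc_subset_Icc_left ht.1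
    calc ((((m + 1 : ℕ) : ℝ≥0) * (1 / (2 * q)) : ℝ≥0) : ℝ≥0∞)
        = (m * (1 / (2 * q)) : ℝ≥0) + (1 / (2 * q) : ℝ≥0) := by
          rw [← ENNReal.coe_add, Nat.cast_succ, add_one_mul]
      _ ≤ eVariationOn γ (Icc a t) + eVariationOn γ (Icc t b) := by
          refine add_le_add (ih ht.1 (hγ.mono hleft) htm.ge fun l hl u hu ↦
            hmaze l (hl.trans_le (by gcongr; omega)) u (hleft hu))
            (le_eVariationOn_of_notMem_mazeWall_block (k := q * m) hq ht.2 (hγ.mono hright)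
              (by push_cast; exact htm.le) (by push_cast; linarith) fun l _ hl u hu ↦
                hmaze l (by rwa [mul_add_one]) u (hright hu))
      _ = eVariationOn γ (Icc a b) := by
          simpa using eVariationOn.Icc_add_Icc γ (s := univ) ht.1 ht.2 (mem_univ t)

end Maze

section Barrier

theorem exists_lipschitzOnWith_of_differentiableOn {E F : Type*} [NormedAddCommGroup E]
    [NormedSpace ℂ E] [NormedAddCommGroup F] [NormedSpace ℂ F] {f : E → F} {D K : Set E}
    (hf : DifferentiableOn ℂ f D) (hD : IsOpen D) (hK : IsCompact K) (hKD : K ⊆ D) :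
    ∃ C : ℝ≥0, LipschitzOnWith C f K := by
  refine LocallyLipschitzOn.exists_lipschitzOnWith_of_compact hK fun x hx ↦ ?_
  obtain ⟨ε, hε, hball⟩ := Metric.mem_nhds_iff.1 <| inter_mem (hD.mem_nhds (hKD hx)) <|
    (hf.continuousOn.continuousAt (hD.mem_nhds (hKD hx))).preimage_mem_nhds
      (ball_mem_nhds (f x) one_pos)
  refine ⟨⟨2 / (ε / 2), by positivity⟩, ball x (ε / 4),
    mem_nhdsWithin_of_mem_nhds (ball_mem_nhds x (by positivity)),
    LipschitzOnWith.of_dist_le_mul fun w hw z hz ↦ ?_⟩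
  have hsub : ball z (ε / 2) ⊆ ball x ε := ball_subset_ball' (by linarith [mem_ball.1 hz])
  have hmaps : MapsTo f (ball z (ε / 2)) (closedBall (f z) 2) := fun y hy ↦ by
    have hy' : dist (f y) (f x) < 1 := (hball (hsub hy)).2
    have hz' : dist (f z) (f x) < 1 := (hball (hsub (mem_ball_self (by positivity)))).2
    exact mem_closedBall.2 (by linarith [dist_triangle_right (f y) (f z) (f x)])
  exact Complex.dist_le_div_mul_dist_of_mapsTo_ball
    (hf.mono fun y hy ↦ (hball (hsub hy)).1) hmaps <| mem_ball.2 <| by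
      linarith [dist_triangle_right w z x, mem_ball.1 hw, mem_ball.1 hz]

theorem exists_first_exit {X : Type*} [TopologicalSpace X] {U : Set X} (hU : IsOpen U)
    {σ : ℝ → X} {a b : ℝ} (hab : a ≤ b) (hσ : ContinuousOn σ (Icc a b)) (ha : σ a ∈ U)
    (hb : σ b ∉ U) : ∃ c ∈ Icc a b, σ c ∈ frontier U ∧ ∀ t ∈ Icc a c, σ t ∈ closure U := by
  obtain ⟨c, ⟨hc, hcU⟩, hmin⟩ := (isCompact_Icc.of_isClosed_subset
    (hσ.preimage_isClosed_of_isClosed isClosed_Icc hU.isClosed_compl)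
    inter_subset_left).exists_isLeast ⟨b, right_mem_Icc.2 hab, hb⟩
  have hbefore : MapsTo σ (Ico a c) U := fun t ht ↦ by
    by_contra htU
    exact (hmin ⟨⟨ht.1, ht.2.le.trans hc.2⟩, htU⟩).not_gt ht.2
  have hne : a ≠ c := by
    rintro rfl
    exact hcU ha
  have hclosure : closure (Ico a c) = Icc a c := closure_Ico hne
  have hmaps : MapsTo σ (Icc a c) (closure U) := by
    rw [← hclosure]
    exact hbefore.closure_of_continuousOn (hclosure ▸ hσ.mono (Icc_subset_Icc_right hc.2))
  exact ⟨c, hc, hU.frontier_eq ▸ ⟨hmaps (right_mem_Icc.2 hc.1), hcU⟩, hmaps⟩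

variable {E : Type*} [NormedAddCommGroup E] [NormedSpace ℂ E] {D A K L : Set E}
  {ι : Type*} [Fintype ι] {Φ : ι → E → ℂ}

theorem exists_lipschitzOnWith_re (hΦ : ∀ i, DifferentiableOn ℂ (Φ i) D) (hD : IsOpen D)
    (hK : IsCompact K) (hKD : K ⊆ D) :
    ∃ C : ℝ≥0, LipschitzOnWith C (fun z i ↦ (Φ i z).re) K := by
  obtain ⟨C, hC⟩ :=
    exists_lipschitzOnWith_of_differentiableOn (differentiableOn_pi.2 hΦ) hD hK hKD
  let re : (ι → ℂ) →L[ℝ] ι → ℝ := .pi fun i ↦ Complex.reCLM ∘L .proj i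
  exact ⟨_, re.lipschitz.comp_lipschitzOnWith hC⟩

theorem exists_differentiableOn_re_eq_tangent (hΦ : ∀ i, DifferentiableOn ℂ (Φ i) D)
    (p : ι → ℝ) :
    ∃ h : E → ℂ, DifferentiableOn ℂ h D ∧ ∀ z, (h z).re = tangent p fun i ↦ (Φ i z).re := by
  refine ⟨fun z ↦ ∑ i, ((2 * p i : ℝ) * Φ i z - (p i ^ 2 : ℝ)), ?_, fun z ↦ ?_⟩
  · exact DifferentiableOn.fun_sum fun i _ ↦ ((hΦ i).const_mul _).sub_const _
  · simp only [tangent, Complex.re_sum, Complex.sub_re, Complex.re_ofReal_mul, Complex.ofReal_re]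

namespace IsHolConvex

theorem exists_finite_separating (hD : IsOpen D) (hK : IsHolConvex D K) {F : Set E}
    (hF : IsCompact F) (hFD : F ⊆ D \ K) :
    ∃ (s : Finset E) (ψ : E → E → ℂ), (∀ z ∈ s, DifferentiableOn ℂ (ψ z) D) ∧
      (∀ w ∈ K, ∑ z ∈ s, ‖ψ z w‖ ^ 2 ≤ 1) ∧ ∀ w ∈ F, 2 ≤ ∑ z ∈ s, ‖ψ z w‖ ^ 2 := by
  have hpeak : ∀ z ∈ F, ∃ g : E → ℂ, DifferentiableOn ℂ g D ∧ g z = 1 ∧ ∀ w ∈ K, ‖g w‖ < 1 / 4 :=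
    fun z hz ↦ hK.exists_eq_one_norm_lt (hFD hz) (by norm_num)
  choose! g hg hgz hgK using hpeak
  obtain ⟨s, hsF, hs⟩ := hF.elim_nhds_subcover (fun z ↦ {w | 3 / 4 < ‖g z w‖}) fun z hz ↦
    ((hg z hz).continuousOn.continuousAt (hD.mem_nhds (hFD hz).1)).norm.eventually_const_lt
      (by norm_num [hgz z hz])
  let ψ (z w : E) : ℂ := (2 * g z w) ^ (s.card + 1)
  have hψ (z w : E) : ‖ψ z w‖ ^ 2 = ((2 * ‖g z w‖) ^ 2) ^ (s.card + 1) := by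
    rw [norm_pow, norm_mul, Complex.norm_ofNat, pow_right_comm]
  refine ⟨s, ψ, fun z hz ↦ ((hg z (hsF z hz)).const_mul 2).pow _, fun w hw ↦ ?_, fun w hw ↦ ?_⟩
  · have hle : ∀ z ∈ s, ‖ψ z w‖ ^ 2 ≤ (1 / 2) ^ (s.card + 1) := fun z hz ↦ by
      rw [hψ]
      gcongr
      nlinarith [hgK z (hsF z hz) w hw, norm_nonneg (g z w)]
    calc ∑ z ∈ s, ‖ψ z w‖ ^ 2 ≤ s.card • (1 / 2) ^ (s.card + 1) :=
          Finset.sum_le_card_nsmul _ _ _ hle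
      _ = s.card / 2 ^ (s.card + 1) := by rw [nsmul_eq_mul, div_pow, one_pow, mul_one_div]
      _ ≤ 1 := (div_le_one (by positivity)).2 <| by
        exact_mod_cast (Nat.lt_of_succ_lt Nat.lt_two_pow_self).le
  · obtain ⟨z, hz, hzw⟩ := mem_iUnion₂.1 (hs hw)
    have hzw : 3 / 4 < ‖g z w‖ := hzw
    calc (2 : ℝ) ≤ ((2 * ‖g z w‖) ^ 2) ^ (s.card + 1) := by
          refine le_trans ?_ (le_self_pow₀ ?_ (by simp)) <;> nlinarith
      _ = ‖ψ z w‖ ^ 2 := (hψ z w).symm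
      _ ≤ _ := Finset.single_le_sum (f := fun z ↦ ‖ψ z w‖ ^ 2) (fun _ _ ↦ by positivity) hz

theorem exists_finite_re_separating (hD : IsOpen D) (hK : IsHolConvex D K) {F : Set E}
    (hF : IsCompact F) (hFD : F ⊆ D \ K) :
    ∃ (s : Finset E) (Φ : s ⊕ s → E → ℂ), (∀ i, DifferentiableOn ℂ (Φ i) D) ∧
      (∀ w ∈ K, ∑ i, (Φ i w).re ^ 2 ≤ 1) ∧ ∀ w ∈ F, 2 ≤ ∑ i, (Φ i w).re ^ 2 := by
  obtain ⟨s, ψ, hψ, hψK, hψF⟩ := hK.exists_finite_separating hD hF hFD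
  let Φ : s ⊕ s → E → ℂ := Sum.elim (fun z w ↦ ψ z w) fun z w ↦ -Complex.I * ψ z w
  have hΦ (w : E) : ∑ i, (Φ i w).re ^ 2 = ∑ z ∈ s, ‖ψ z w‖ ^ 2 := by
    rw [Fintype.sum_sum_type, ← Finset.sum_add_distrib, ← Finset.sum_coe_sort s]
    refine Finset.sum_congr rfl fun z _ ↦ ?_
    simp only [Φ, Sum.elim_inl, Sum.elim_inr, Complex.sq_norm, Complex.normSq_apply]
    simp [sq]
  refine ⟨s, Φ, ?_, fun w hw ↦ (hΦ w).trans_le (hψK w hw),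
    fun w hw ↦ (hψF w hw).trans_eq (hΦ w).symm⟩
  rintro (z | z)
  · exact hψ z z.2
  · exact (hψ z z.2).const_mul _

theorem sep_re_mem_panel (hL : IsHolConvex D L) (hΦ : ∀ i, DifferentiableOn ℂ (Φ i) D)
    (p : ι → ℝ) (r s : ℝ) : IsHolConvex D {z ∈ L | (fun i ↦ (Φ i z).re) ∈ panel p r s} := by
  obtain ⟨h, hh, hre⟩ := exists_differentiableOn_re_eq_tangent hΦ p
  convert (hL.sep_re_mem_Icc hΦ (fun i ↦ p i - r) fun i ↦ p i + r).sep_re_mem_Icc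
    (fun _ : Unit ↦ hh) (fun _ ↦ s) fun _ ↦ s using 1
  ext z
  simp only [panel, mem_ofPred_eq, hre, Icc_self, mem_singleton_iff, forall_const, and_assoc,
    ← Real.closedBall_eq_Icc, mem_closedBall, Real.dist_eq]

theorem union_sep_re_mem_shell (hA : IsHolConvex D A) (hL : IsHolConvex D L)
    (hΦ : ∀ i, DifferentiableOn ℂ (Φ i) D) {θ η s : ℝ} (hη : 0 < η)
    (hAs : ∀ w ∈ A, ∑ i, (Φ i w).re ^ 2 < s - η) :
    IsHolConvex D (A ∪ {z ∈ L | (fun i ↦ (Φ i z).re) ∈ shell θ η s}) := by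
  let Φre (z : E) (i : ι) : ℝ := (Φ i z).re
  let p (n : ι → ℤ) (i : ι) : ℝ := θ + n i
  have hbounded : Bornology.IsBounded (Φre '' L) :=
    (hL.isCompact.image_of_continuousOn <| continuousOn_pi.2 fun i ↦
      Complex.continuous_re.comp_continuousOn <| (hΦ i).continuousOn.mono hL.subset).isBounded
  have hfin := finite_setOf_panel_inter_nonempty hbounded θ (1 / 2 - η) s
  choose h hh hre using fun n ↦ exists_differentiableOn_re_eq_tangent hΦ (p n)
  have hunion : {z ∈ L | Φre z ∈ shell θ η s} =
      ⋃ n ∈ hfin.toFinset, {z ∈ L | Φre z ∈ panel (p n) (1 / 2 - η) s} := by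
    ext z
    simp only [mem_shell_iff hη.le, mem_iUnion, Finite.mem_toFinset, mem_ofPred_eq, exists_prop]
    exact ⟨fun ⟨hz, n, hn⟩ ↦ ⟨n, ⟨_, hn, mem_image_of_mem _ hz⟩, hz, hn⟩,
      fun ⟨n, _, hz, hn⟩ ↦ ⟨hz, n, hn⟩⟩
  rw [hunion]
  refine hA.union_biUnion (fun n _ ↦ hL.sep_re_mem_panel hΦ _ _ _) (c := s - η)
    (fun n _ ↦ hh n) (fun n _ w hw ↦ ?_) (fun n _ m _ hmn w hw ↦ ?_) fun n _ w hw ↦ ?_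
  · exact (hre n w).trans_lt ((tangent_le_sum_sq _ _).trans_lt (hAs w hw))
  · rw [hre]
    linarith [tangent_le_of_mem_panel hη.le hmn.symm hw.2]
  · rw [hre, hw.2.2]
    exact sub_lt_self s hη

theorem union_sep_re_mem_maze (hA : IsHolConvex D A) (hL : IsHolConvex D L)
    (hΦ : ∀ i, DifferentiableOn ℂ (Φ i) D) {q : ℕ} (hq : Fintype.card ι < q) {e : ℝ}
    (hAe : ∀ w ∈ A, ∑ i, (Φ i w).re ^ 2 ≤ e) (T : ℕ) :
    IsHolConvex D (A ∪ {z ∈ L | ∃ l < T, (fun i ↦ (Φ i z).re) ∈ mazeWall q e l}) := by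
  have hq1 : (1 : ℝ) ≤ q := by exact_mod_cast Nat.one_le_of_lt hq
  induction T with
  | zero => simpa using hA
  | succ T ih =>
    have hinv : 1 / (4 * q) < (q : ℝ) / 2 := by
      rw [div_lt_div_iff₀ (by positivity) two_pos]
      nlinarith
    have := ih.union_sep_re_mem_shell hL hΦ (θ := T / q) (η := 1 / (4 * q))
      (s := e + q * (T + 1 / 2)) (by positivity) fun w hw ↦ ?_
    · rw [union_assoc, ← sep_or] at this
      simp only [Nat.exists_lt_succ_right]
      exact this
    · suffices ∑ i, (Φ i w).re ^ 2 ≤ e + q * T by linarith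
      obtain hw | ⟨-, l, hl, hw⟩ := hw
      · exact (hAe w hw).trans (le_add_of_nonneg_right (by positivity))
      · refine (sum_sq_mem_Ioo_of_mem_mazeWall hq hw).2.le.trans ?_
        gcongr
        exact_mod_cast hl

end IsHolConvex

/-- Every path from `K` to the complement of `U` that avoids `Γ` has length greater than `M`. -/
def IsBarrier {X : Type*} [PseudoEMetricSpace X] (K U Γ : Set X) (M : ℝ≥0) : Prop :=
  ∀ (σ : ℝ → X) (a b : ℝ), a ≤ b → ContinuousOn σ (Icc a b) → σ a ∈ K → σ b ∉ U →
    (∀ t ∈ Icc a b, σ t ∉ Γ) → M < eVariationOn σ (Icc a b)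

theorem isBarrier_sep_mem_maze {X : Type*} [PseudoEMetricSpace X] {K U : Set X} (hU : IsOpen U)
    (hKU : K ⊆ U) {f : X → ι → ℝ} {C : ℝ≥0} (hf : LipschitzOnWith C f (closure U)) {q : ℕ}
    (hq : Fintype.card ι < q) {e : ℝ} {m : ℕ} (hfK : ∀ w ∈ K, ∑ i, f w i ^ 2 ≤ e)
    (hfU : ∀ w ∈ frontier U, e + q * (q * m) ≤ ∑ i, f w i ^ 2) {M : ℝ≥0}
    (hM : C * M < m * (1 / (2 * q))) :
    IsBarrier K U {z ∈ closure U | ∃ l < q * m, f z ∈ mazeWall q e l} M := by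
  intro σ a b hab hσ ha hb hΓ
  obtain ⟨c, hc, hcU, hclosure⟩ := exists_first_exit hU hab hσ (hKU ha) hb
  have hsub : Icc a c ⊆ Icc a b := Icc_subset_Icc_right hc.2
  have hlong := le_eVariationOn_of_notMem_mazeWall hq hc.1
    (hf.continuousOn.comp (hσ.mono hsub) hclosure) (hfK _ ha) (hfU _ hcU)
    fun l hl t ht hwall ↦ hΓ t (hsub ht) ⟨hclosure t ht, l, hl, hwall⟩
  by_contra! hle
  have : ((m * (1 / (2 * q)) : ℝ≥0) : ℝ≥0∞) ≤ C * M := calc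
    ((m * (1 / (2 * q)) : ℝ≥0) : ℝ≥0∞) ≤ eVariationOn (f ∘ σ) (Icc a c) := hlong
    _ ≤ C * eVariationOn σ (Icc a c) := hf.comp_eVariationOn_le hclosure
    _ ≤ C * M := by gcongr; exact (eVariationOn.mono σ hsub).trans hle
  exact hM.not_ge (by exact_mod_cast this)

theorem sep_mem_maze_subset {X : Type*} [TopologicalSpace X] {K U : Set X} (hU : IsOpen U)
    {f : X → ι → ℝ} {q : ℕ} (hq : Fintype.card ι < q) {e : ℝ} {m : ℕ}
    (hfK : ∀ w ∈ K, ∑ i, f w i ^ 2 ≤ e)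
    (hfU : ∀ w ∈ frontier U, e + q * (q * m) ≤ ∑ i, f w i ^ 2) :
    {z ∈ closure U | ∃ l < q * m, f z ∈ mazeWall q e l} ⊆ U \ K := by
  rintro z ⟨hz, l, hl, hwall⟩
  have hmem := sum_sq_mem_Ioo_of_mem_mazeWall hq hwall
  have hlm : (l : ℝ) + 1 ≤ q * m := by exact_mod_cast hl
  refine ⟨?_, fun hzK ↦ ?_⟩
  · by_contra hzU
    exact (hmem.2.trans_le (by gcongr)).not_ge (hfU z (hU.frontier_eq ▸ ⟨hz, hzU⟩))
  · exact (hmem.1.trans_le (hfK z hzK)).not_ge (le_add_of_nonneg_right (by positivity))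

theorem exists_compact_barrier_of_re_separating (hΦ : ∀ i, DifferentiableOn ℂ (Φ i) D)
    (hD : IsOpen D) {U : Set E} (hU : IsOpen U) (hL : IsHolConvex D (closure U)) (hKU : K ⊆ U)
    (hΦK : ∀ w ∈ K, ∑ i, (Φ i w).re ^ 2 ≤ 1)
    (hΦU : ∀ w ∈ frontier U, 2 ≤ ∑ i, (Φ i w).re ^ 2) (M : ℝ≥0) :
    ∃ Γ, IsCompact Γ ∧ Γ ⊆ U \ K ∧ (∀ A ⊆ K, IsHolConvex D A → IsHolConvex D (A ∪ Γ)) ∧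
      IsBarrier K U Γ M := by
  let q := Fintype.card ι + 1
  have hq : Fintype.card ι < q := Nat.lt_succ_self _
  obtain ⟨C, hC⟩ := exists_lipschitzOnWith_re hΦ hD hL.isCompact hL.subset
  obtain ⟨R, hR⟩ := exists_nat_gt (2 * q ^ 2 * C * M)
  let Ψ (i : ι) (z : E) : ℂ := (q * R : ℝ) * Φ i z
  let f (z : E) (i : ι) : ℝ := (Ψ i z).re
  have hf_eq (z : E) : f z = (q * R : ℝ) • fun i ↦ (Φ i z).re :=
    funext fun i ↦ Complex.re_ofReal_mul _ _
  have hf : LipschitzOnWith (q * R * C) f (closure U) := by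
    simpa [funext hf_eq, Function.comp_def] using
      (lipschitzWith_smul (q * R : ℝ)).comp_lipschitzOnWith hC
  have hsum (z : E) : ∑ i, f z i ^ 2 = (q * R) ^ 2 * ∑ i, (Φ i z).re ^ 2 := by
    simp only [hf_eq, Pi.smul_apply, smul_eq_mul, mul_pow, Finset.mul_sum]
  have hfK : ∀ w ∈ K, ∑ i, f w i ^ 2 ≤ (q * R) ^ 2 := fun w hw ↦ by
    rw [hsum]
    exact mul_le_of_le_one_right (by positivity) (hΦK w hw)
  have hfU : ∀ w ∈ frontier U, (q * R) ^ 2 + q * (q * (R ^ 2 : ℕ)) ≤ ∑ i, f w i ^ 2 :=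
    fun w hw ↦ by
      rw [hsum]
      push_cast
      nlinarith [hΦU w hw, sq_nonneg (q * R : ℝ)]
  have hCM : q * R * C * M < (R ^ 2 : ℕ) * (1 / (2 * q) : ℝ≥0) := by
    have hR0 : (0 : ℝ≥0) < R := pos_of_gt hR
    calc q * R * C * M = R / (2 * q) * (2 * q ^ 2 * C * M) := by field_simp
      _ < R / (2 * q) * R := by gcongr
      _ = (R ^ 2 : ℕ) * (1 / (2 * q) : ℝ≥0) := by push_cast; ring
  have hconv : ∀ A ⊆ K, IsHolConvex D A → IsHolConvex D
      (A ∪ {z ∈ closure U | ∃ l < q * R ^ 2, f z ∈ mazeWall q ((q * R) ^ 2) l}) :=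
    fun A hAK hA ↦ hA.union_sep_re_mem_maze hL (fun i ↦ (hΦ i).const_mul _) hq
      (fun w hw ↦ hfK w (hAK hw)) _
  refine ⟨_, ?_, sep_mem_maze_subset hU hq hfK hfU, hconv,
    isBarrier_sep_mem_maze hU hKU hf hq hfK hfU hCM⟩
  simpa using (hconv ∅ (empty_subset K) .empty).isCompact

theorem exists_compact_barrier (hD : IsOpen D) (hK : IsHolConvex D K)
    {U : Set E} (hU : IsOpen U) (hL : IsHolConvex D (closure U)) (hKU : K ⊆ U) (M : ℝ≥0) :
    ∃ Γ, IsCompact Γ ∧ Γ ⊆ U \ K ∧ (∀ A ⊆ K, IsHolConvex D A → IsHolConvex D (A ∪ Γ)) ∧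
      IsBarrier K U Γ M := by
  obtain ⟨s, Φ, hΦ, hΦK, hΦU⟩ := hK.exists_finite_re_separating hD
    (hL.isCompact.of_isClosed_subset isClosed_frontier frontier_subset_closure)
    fun z hz ↦ ⟨hL.subset hz.1, fun hzK ↦ (hU.frontier_eq ▸ hz).2 (hKU hzK)⟩
  exact exists_compact_barrier_of_re_separating hΦ hD hU hL hKU hΦK hΦU M

end Barrier

theorem labyrinth_general {E : Type*} [NormedAddCommGroup E] [NormedSpace ℂ E] {D : Set E}
    (hD : IsOpen D) {U : ℕ → Set E} (hU : ∀ n, IsOpen (U n))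
    (hconv : ∀ n, IsHolConvex D (closure (U n))) (hsub : ∀ n, closure (U n) ⊆ U (n + 1))
    (M : ℕ → ℝ≥0) :
    ∃ Γ : ℕ → Set E,
      (∀ n, IsCompact (Γ n) ∧ Γ n ⊆ U (n + 1) \ closure (U n)) ∧
      (∀ n m, n ≤ m → IsHolConvex D (closure (U n) ∪ ⋃ j ∈ Icc n m, Γ j)) ∧
      ∀ n, IsBarrier (closure (U n)) (U (n + 1)) (Γ n) (M n) := by
  choose Γ hcpt hΓ hunion hbarrier using fun n ↦
    exists_compact_barrier hD (hconv n) (hU (n + 1)) (hconv (n + 1)) (hsub n) (M n)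
  have hmono : Monotone fun n ↦ closure (U n) :=
    monotone_nat_of_le_succ fun n ↦ (hsub n).trans subset_closure
  refine ⟨Γ, fun n ↦ ⟨hcpt n, hΓ n⟩, fun n m hnm ↦ ?_, hbarrier⟩
  induction m, hnm using Nat.le_induction with
  | base => simpa using hunion n _ Subset.rfl (hconv n)
  | succ m hnm ih =>
    have hinside : closure (U n) ∪ ⋃ j ∈ Icc n m, Γ j ⊆ closure (U (m + 1)) :=
      union_subset (hmono (by omega)) <| iUnion₂_subset fun j hj ↦
        (hΓ j).trans <| sdiff_subset.trans <| subset_closure.trans <| hmono <| by grind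
    have hIcc : Icc n (m + 1) = insert (m + 1) (Icc n m) := by grind
    rw [hIcc, biUnion_insert, union_comm (Γ (m + 1)), ← union_assoc]
    exact hunion (m + 1) _ hinside ih

/-- **Labyrinth theorem.** Let `D` be pseudoconvex, `(D_n)` an exhaustion of `D` by strictly
pseudoconvex domains that are `𝒪(D)`-convex, and `(M_n)` positive numbers. Then there are
compact sets `Γ_n ⊆ D_{n+1} \ cl(D_n)` such that `cl(D_n) ∪ Γ_n ∪ ⋯ ∪ Γ_m` is `𝒪(D)`-convex
for every `m ≥ n`, and every continuous path connecting `bD_n` to `bD_{n+1}` omitting `Γ_n`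
has length (total variation) greater than `M_n`. -/
theorem labyrinth {N : ℕ} (D : Set (EN N)) (hD : Pseudoconvex D)
    (D' : ℕ → Set (EN N)) (hpsc : ∀ n, StrictlyPseudoconvex (D' n))
    (hconv : ∀ n, HolConvexIn D (closure (D' n)))
    (hcpt : ∀ n, IsCompact (closure (D' n)))
    (hsub : ∀ n, closure (D' n) ⊆ D' (n + 1))
    (hunion : (⋃ n, D' n) = D)
    (M : ℕ → ℝ) (hM : ∀ n, 0 < M n) :
    ∃ Γ : ℕ → Set (EN N),
      (∀ n, IsCompact (Γ n) ∧ Γ n ⊆ D' (n + 1) \ closure (D' n)) ∧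
      (∀ n m, n ≤ m → HolConvexIn D (closure (D' n) ∪ ⋃ j ∈ Icc n m, Γ j)) ∧
      ∀ n, ∀ σ : ℝ → EN N, ContinuousOn σ (Icc (0:ℝ) 1) →
        σ 0 ∈ frontier (D' n) → σ 1 ∈ frontier (D' (n + 1)) →
        (∀ t ∈ Icc (0:ℝ) 1, σ t ∉ Γ n) →
        ENNReal.ofReal (M n) < eVariationOn σ (Icc (0:ℝ) 1) := by
  have hopen (n : ℕ) : IsOpen (D' n) := (hpsc n).choose_spec.1.1
  obtain ⟨Γ, hΓ, hconvΓ, hbarrier⟩ := labyrinth_general hD.1.1 hopen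
    (fun n ↦ isHolConvex_iff.2 ⟨hcpt n, hconv n⟩) hsub fun n ↦ (M n).toNNReal
  refine ⟨Γ, hΓ, fun n m hnm ↦ (isHolConvex_iff.1 (hconvΓ n m hnm)).2, fun n σ hσ h0 h1 ↦ ?_⟩
  exact hbarrier n σ 0 1 zero_le_one hσ (frontier_subset_closure h0)
    ((hopen (n + 1)).frontier_eq ▸ h1).2
end

section
/- Let K and L be compact subsets of a pseudoconvex domain D in ℂ^N. Suppose there is f ∈ 𝒪(D) such that the polynomial hulls of f(K) and f(L) in ℂ are disjoint. Then the 𝒪(D)-hull of K ∪ L equals the union of the 𝒪(D)-hull of K and the 𝒪(D)-hull of L. -/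
open Set Filter Topology Metric MeasureTheory
open scoped ENNReal NNReal InnerProductSpace ComplexConjugate

/-!
If `z` lies in the hull of `K ∪ L`, then `f z` lies in the union of `X = f(K)^` and `Y = f(L)^`, and
when `f z ∈ X` a function `q = p ∘ f`, with `p` a polynomial close to `1` on `X` and to `0` on `Y`,
cuts every `φ ∈ 𝒪(D)` down to `K` and shows that `z` lies in the hull of `K`. The first claim is an
instance of the second, with `{f z}` and `X ∪ Y` in place of `X` and `Y`, since the hull of `∅` is
empty.

Such polynomials exist by a theorem of Runge type. First, `X ∪ Y` does not separate the plane: a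
compact set `E` has no bounded complementary component exactly when `z - w` has a continuous
logarithm on `E` for every `w ∉ E`, and logarithms on disjoint closed sets glue. Hence the
coordinate function has spectrum in `E = X ∪ Y` in the Banach algebra `P(E)`, the uniform closure
of the polynomials in `C(E)`. For a bump function `h` with `h = 1` near `X` and `h = 0` near `Y`,
the integral of `∂h/∂z̄` against the resolvent of the coordinate converges in `P(E)`, and by the
Cauchy–Pompeiu formula it equals `-π h` on `E`.
-/

noncomputable section

theorem frontier_connectedComponentIn_subset_compl {X : Type*} [TopologicalSpace X]
    [LocallyConnectedSpace X] {O : Set X} (hO : IsOpen O) (x : X) :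
    frontier (connectedComponentIn O x) ⊆ Oᶜ := by
  intro z hz hzO
  obtain ⟨y, hyz, hyx⟩ := mem_closure_iff.1 hz.1 _ hO.connectedComponentIn
    (mem_connectedComponentIn hzO)
  rw [connectedComponentIn_eq hyx, ← connectedComponentIn_eq hyz,
    hO.connectedComponentIn.frontier_eq] at hz
  exact hz.2 (mem_connectedComponentIn hzO)

/-! ### Continuous logarithms -/

/-- `f` has a continuous logarithm on `s`. -/
def HasLogOn {X : Type*} [TopologicalSpace X] (f : X → ℂ) (s : Set X) : Prop :=
  ∃ g : X → ℂ, ContinuousOn g s ∧ EqOn (Complex.exp ∘ g) f s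

section HasLogOn

variable {X : Type*} [TopologicalSpace X] {f f' : X → ℂ} {s t : Set X}

theorem HasLogOn.mono (h : HasLogOn f t) (hst : s ⊆ t) : HasLogOn f s :=
  let ⟨g, hg, hgf⟩ := h
  ⟨g, hg.mono hst, hgf.mono hst⟩

theorem HasLogOn.congr (h : HasLogOn f s) (hff' : EqOn f f' s) : HasLogOn f' s :=
  let ⟨g, hg, hgf⟩ := h
  ⟨g, hg, hgf.trans hff'⟩

theorem HasLogOn.mul (h : HasLogOn f s) (h' : HasLogOn f' s) :
    HasLogOn (fun x => f x * f' x) s :=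
  let ⟨g, hg, hgf⟩ := h
  let ⟨g', hg', hgf'⟩ := h'
  ⟨fun x => g x + g' x, hg.add hg', fun _ hx =>
    (Complex.exp_add _ _).trans (congrArg₂ (· * ·) (hgf hx) (hgf' hx))⟩

theorem HasLogOn.div (h : HasLogOn f s) (h' : HasLogOn f' s) :
    HasLogOn (fun x => f x / f' x) s :=
  let ⟨g, hg, hgf⟩ := h
  let ⟨g', hg', hgf'⟩ := h'
  ⟨fun x => g x - g' x, hg.sub hg', fun _ hx =>
    (Complex.exp_sub _ _).trans (congrArg₂ (· / ·) (hgf hx) (hgf' hx))⟩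

theorem hasLogOn_const {c : ℂ} (hc : c ≠ 0) (s : Set X) : HasLogOn (fun _ => c) s :=
  ⟨fun _ => Complex.log c, continuousOn_const, fun _ _ => Complex.exp_log hc⟩

theorem hasLogOn_of_mapsTo_slitPlane (hf : ContinuousOn f s) (hs : MapsTo f s Complex.slitPlane) :
    HasLogOn f s :=
  ⟨fun x => Complex.log (f x), hf.clog hs,
    fun _ hx => Complex.exp_log (Complex.slitPlane_ne_zero (hs hx))⟩

theorem hasLogOn_iff_of_norm_sub_lt (hf : ContinuousOn f s) (hf' : ContinuousOn f' s)
    (h : ∀ x ∈ s, ‖f' x - f x‖ < ‖f x‖) : HasLogOn f s ↔ HasLogOn f' s := by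
  have hf0 : ∀ x ∈ s, f x ≠ 0 := fun x hx => norm_pos_iff.1 ((norm_nonneg _).trans_lt (h x hx))
  have hf'0 : ∀ x ∈ s, f' x ≠ 0 := fun x hx hx' => by simpa [hx'] using h x hx
  have hquot : HasLogOn (fun x => f' x / f x) s := by
    refine hasLogOn_of_mapsTo_slitPlane (hf'.div hf hf0) fun x hx => ?_
    have : ‖f' x / f x - 1‖ < 1 := by
      rw [div_sub_one (hf0 x hx), norm_div]
      exact (div_lt_one (norm_pos_iff.2 (hf0 x hx))).2 (h x hx)
    simpa using Complex.mem_slitPlane_of_norm_lt_one this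
  constructor <;> intro hlog
  · exact (hlog.mul hquot).congr fun x hx => mul_div_cancel₀ _ (hf0 x hx)
  · exact (hlog.div hquot).congr fun x hx => div_div_cancel₀ (hf'0 x hx)

theorem HasLogOn.union (hs : HasLogOn f s) (ht : HasLogOn f t) (hsc : IsClosed s)
    (htc : IsClosed t) (hst : Disjoint s t) : HasLogOn f (s ∪ t) := by
  classical
  obtain ⟨g₁, hg₁, hgf₁⟩ := hs
  obtain ⟨g₂, hg₂, hgf₂⟩ := ht
  have h₁ : EqOn (s.piecewise g₁ g₂) g₁ s := s.piecewise_eqOn g₁ g₂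
  have h₂ : EqOn (s.piecewise g₁ g₂) g₂ t :=
    (s.piecewise_eqOn_compl g₁ g₂).mono hst.subset_compl_left
  exact ⟨s.piecewise g₁ g₂, (hg₁.congr h₁).union_of_isClosed (hg₂.congr h₂) hsc htc,
    (h₁.comp_left.trans hgf₁).union (h₂.comp_left.trans hgf₂)⟩

end HasLogOn

theorem hasLogOn_sub_of_norm_lt {s : Set ℂ} {a : ℂ} (ha : a ≠ 0) (hs : ∀ z ∈ s, ‖z‖ < ‖a‖) :
    HasLogOn (fun z => z - a) s :=
  (hasLogOn_iff_of_norm_sub_lt continuousOn_const (by fun_prop)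
    fun z hz => by simpa using hs z hz).1 (hasLogOn_const (neg_ne_zero.2 ha) s)

theorem hasLogOn_sub_iff_of_mem_connectedComponentIn {s : Set ℂ} (hs : IsClosed s) {a b : ℂ}
    (hb : b ∈ connectedComponentIn sᶜ a) :
    HasLogOn (fun z => z - a) s ↔ HasLogOn (fun z => z - b) s := by
  have ha : a ∈ sᶜ := connectedComponentIn_nonempty_iff.1 ⟨b, hb⟩
  refine isPreconnected_connectedComponentIn.induction₂
    (fun a b => HasLogOn (fun z => z - a) s ↔ HasLogOn (fun z => z - b) s) (fun c hc => ?_)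
    (fun _ _ _ _ _ _ => Iff.trans) (fun _ _ _ _ => Iff.symm) (mem_connectedComponentIn ha) hb
  obtain ⟨r, hr, hball⟩ :=
    Metric.isOpen_iff.1 hs.isOpen_compl c (connectedComponentIn_subset _ _ hc)
  filter_upwards [mem_nhdsWithin_of_mem_nhds (ball_mem_nhds c hr)] with d hd
  refine hasLogOn_iff_of_norm_sub_lt (by fun_prop) (by fun_prop) fun z hz => ?_
  rw [sub_sub_sub_cancel_left, ← dist_eq_norm, ← dist_eq_norm, dist_comm c d]
  exact hd.trans_le (not_lt.1 fun hzc => hball hzc hz)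

theorem not_hasLogOn_sub_sphere (w : ℂ) {R : ℝ} (hR : 0 < R) :
    ¬ HasLogOn (fun z => z - w) (sphere w R) := by
  rintro ⟨g, hg, hgexp⟩
  set l : ℝ → ℂ := fun θ => g (circleMap w R θ)
  have hlexp : ∀ θ, Complex.exp (l θ) = circleMap 0 R θ := fun θ =>
    (hgexp (circleMap_mem_sphere w hR.le θ)).trans (circleMap_sub_center w R θ)
  have hl : Continuous l :=
    hg.comp_continuous (continuous_circleMap w R) (circleMap_mem_sphere w hR.le)
  have hlift : l = fun θ : ℝ => l 0 + θ * Complex.I := by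
    refine Complex.isCoveringMap_exp.eq_of_comp_eq hl (by fun_prop) (funext fun θ => ?_) 0 (by simp)
    simp [Complex.exp_add, hlexp, circleMap]
  have hperiod : l (2 * Real.pi) = l 0 :=
    congrArg g (by simpa using periodic_circleMap w R 0)
  rw [hlift] at hperiod
  simp [Real.pi_ne_zero] at hperiod

/-! ### Full sets -/

/-- A subset of the plane is full if no component of its complement is bounded; for compact sets
this is polynomial convexity. -/
def IsFull (E : Set ℂ) : Prop :=
  ∀ w ∉ E, ¬ Bornology.IsBounded (connectedComponentIn Eᶜ w)

theorem hasLogOn_sub_of_not_isBounded {E : Set ℂ} (hE : IsCompact E) {w : ℂ}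
    (hw : ¬ Bornology.IsBounded (connectedComponentIn Eᶜ w)) : HasLogOn (fun z => z - w) E := by
  obtain ⟨R, hR0, hR⟩ := hE.isBounded.subset_ball_lt 0 0
  obtain ⟨a, ha, haR⟩ : ∃ a ∈ connectedComponentIn Eᶜ w, R ≤ ‖a‖ := by
    by_contra! hlt
    exact hw (isBounded_ball.subset fun z hz => mem_ball_zero_iff.2 (hlt z hz))
  rw [hasLogOn_sub_iff_of_mem_connectedComponentIn hE.isClosed ha]
  exact hasLogOn_sub_of_norm_lt (norm_pos_iff.1 (hR0.trans_le haR))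
    fun z hz => (mem_ball_zero_iff.1 (hR hz)).trans_le haR

/- If the component `U` of `w` were bounded, a logarithm of `z - w` on `E` would extend over `U`,
and gluing its exponential with `z - w` off `U` would give a nonvanishing function on the plane
that agrees with `z - w` on large circles. -/
theorem not_isBounded_of_hasLogOn_sub {E : Set ℂ} (hE : IsClosed E) {w : ℂ} (hw : w ∉ E)
    (hlog : HasLogOn (fun z => z - w) E) : ¬ Bornology.IsBounded (connectedComponentIn Eᶜ w) := by
  classical
  intro hbdd
  set U := connectedComponentIn Eᶜ w
  obtain ⟨g, hg, hgexp⟩ := hlog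
  obtain ⟨G, hG⟩ := ContinuousMap.exists_restrict_eq hE
    ⟨E.domRestrict g, continuousOn_iff_continuous_domRestrict.1 hg⟩
  have hGE : ∀ z ∈ E, Complex.exp (G z) = z - w := fun z hz =>
    (congrArg Complex.exp (DFunLike.congr_fun hG ⟨z, hz⟩)).trans (hgexp hz)
  have hfr : frontier U ⊆ E := by
    simpa using frontier_connectedComponentIn_subset_compl hE.isOpen_compl w
  set F : ℂ → ℂ := fun z => if z ∈ U then Complex.exp (G z) else z - w
  have hF : Continuous F :=
    Continuous.if (fun z hz => hGE z (hfr hz)) (by fun_prop) (by fun_prop)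
  have hF0 : ∀ z, F z ≠ 0 := fun z => by
    by_cases hz : z ∈ U
    · simp [F, hz]
    · have : z ≠ w := fun h => hz (h ▸ mem_connectedComponentIn hw)
      simpa [F, hz, sub_eq_zero]
  obtain ⟨R, hR0, hR⟩ := hbdd.subset_ball_lt 0 w
  have : ContractibleSpace (univ : Set ℂ) := convex_univ.contractibleSpace univ_nonempty
  have hFlog : HasLogOn F univ :=
    Complex.exists_continuousOn_eqOn_exp_comp (U := univ) (SimplyConnectedSpace.ofContractible _)
      isOpen_univ hF.continuousOn (by simpa using hF0)
  refine not_hasLogOn_sub_sphere w hR0 ((hFlog.mono (subset_univ _)).congr fun z hz => ?_)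
  exact if_neg fun hzU => (hR hzU).ne hz

theorem IsFull.union {E F : Set ℂ} (hE : IsFull E) (hF : IsFull F) (hEc : IsCompact E)
    (hFc : IsCompact F) (hEF : Disjoint E F) : IsFull (E ∪ F) := fun w hw =>
  not_isBounded_of_hasLogOn_sub (hEc.isClosed.union hFc.isClosed) hw <|
    (hasLogOn_sub_of_not_isBounded hEc (hE w fun h => hw (Or.inl h))).union
      (hasLogOn_sub_of_not_isBounded hFc (hF w fun h => hw (Or.inr h)))
      hEc.isClosed hFc.isClosed hEF

theorem isFull_singleton (a : ℂ) : IsFull {a} := by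
  have hconn : IsPreconnected ({a}ᶜ : Set ℂ) :=
    (isConnected_compl_singleton_of_one_lt_rank (by simp) a).isPreconnected
  intro w hw hbdd
  rw [hconn.connectedComponentIn hw] at hbdd
  apply NormedSpace.unbounded_univ ℝ ℂ
  rw [← compl_union_self {a}]
  exact hbdd.union Bornology.isBounded_singleton

theorem isCompact_polyHull1 (F : Set ℂ) : IsCompact (polyHull1 F) := by
  refine isCompact_of_isClosed_isBounded ?_
    (isBounded_iff_forall_norm_le.2 ⟨⨆ w ∈ F, ‖w‖, fun z hz => ?_⟩)
  · simp only [polyHull1, ofPred_forall]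
    exact isClosed_iInter fun p => isClosed_le p.continuous.norm continuous_const
  · simpa using hz Polynomial.X

theorem isFull_polyHull1 (F : Set ℂ) : IsFull (polyHull1 F) := fun w hw hbdd => by
  have hclosed : IsClosed (polyHull1 F) := (isCompact_polyHull1 F).isClosed
  refine hw fun p => Complex.norm_le_of_forall_mem_frontier_norm_le hbdd
    p.differentiable.diffContOnCl (fun z hz => ?_)
    (subset_closure (mem_connectedComponentIn hw))
  have := frontier_connectedComponentIn_subset_compl hclosed.isOpen_compl w hz
  exact not_not.1 this p

/-! ### The Cauchy–Pompeiu formula -/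

theorem integrableOn_Ioi_prod_Ioo_of_eq_zero {F : Type*} [NormedAddCommGroup F]
    {f : ℝ × ℝ → F} (hf : Continuous f) {R : ℝ} (hR : ∀ p : ℝ × ℝ, R < p.1 → f p = 0) (a b c : ℝ) :
    IntegrableOn f (Ioi a ×ˢ Ioo b c) := by
  refine (hf.continuousOn.integrableOn_compact (isCompact_Icc.prod isCompact_Icc) :
    IntegrableOn f (Icc a R ×ˢ Icc b c)).of_forall_sdiff_eq_zero
    (measurableSet_Ioi.prod measurableSet_Ioo) ?_
  rintro p ⟨⟨hp₁, hp₂⟩, hp⟩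
  exact hR p (not_le.1 fun hle => hp ⟨⟨le_of_lt hp₁, hle⟩, Ioo_subset_Icc_self hp₂⟩)

section CauchyPompeiu

variable {F : Type*} [NormedAddCommGroup F] [NormedSpace ℂ F]

/-- The Wirtinger derivative `∂h/∂z̄`. -/
def dbar (h : ℂ → F) (w : ℂ) : F :=
  (2⁻¹ : ℂ) • (fderiv ℝ h w 1 + Complex.I • fderiv ℝ h w Complex.I)

theorem dbar_congr {h h' : ℂ → F} {z : ℂ} (hh' : h =ᶠ[𝓝 z] h') :
    dbar h z = dbar h' z := by
  rw [dbar, dbar, hh'.fderiv_eq]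

theorem dbar_eventuallyEq_zero {h : ℂ → F} {z : ℂ} {c : F} (hz : h =ᶠ[𝓝 z] fun _ => c) :
    dbar h =ᶠ[𝓝 z] 0 := by
  filter_upwards [hz.eventuallyEq_nhds] with w hw
  rw [dbar_congr hw]
  simp [dbar]

theorem continuous_dbar {h : ℂ → F} (hh : ContDiff ℝ 1 h) : Continuous (dbar h) := by
  have := hh.continuous_fderiv one_ne_zero
  unfold dbar
  fun_prop

theorem hasCompactSupport_dbar {h : ℂ → F} (hh : HasCompactSupport h) :
    HasCompactSupport (dbar h) :=
  (hh.fderiv ℝ).comp_left (g := fun L : ℂ →L[ℝ] F => (2⁻¹ : ℂ) • (L 1 + Complex.I • L Complex.I))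
    (by simp)

theorem conj_smul_map_one_add_I_smul_map_I (L : ℂ →L[ℝ] F) (e : ℂ) :
    conj e • (L 1 + Complex.I • L Complex.I) = L e + Complex.I • L (e * Complex.I) := by
  have hL : ∀ a b : ℝ, L (a + b * Complex.I) = (a : ℂ) • L 1 + (b : ℂ) • L Complex.I :=
    fun a b => by
      have : (a + b * Complex.I : ℂ) = a • (1 : ℂ) + b • Complex.I := by simp
      rw [this, map_add, map_smul, map_smul, Complex.coe_smul, Complex.coe_smul]
  obtain ⟨a, b⟩ := e
  have h1 : (⟨a, b⟩ : ℂ) = a + b * Complex.I := Complex.mk_eq_add_mul_I a b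
  have h2 : (a + b * Complex.I) * Complex.I = ((-b : ℝ) : ℂ) + (a : ℝ) * Complex.I := by
    push_cast
    linear_combination (b : ℂ) * Complex.I_sq
  rw [h1, h2, hL, hL]
  simp only [map_add, map_mul, Complex.conj_ofReal, Complex.conj_I]
  match_scalars
  · ring
  · linear_combination (-b : ℂ) * Complex.I_sq

theorem smul_inv_smul_dbar_circleMap (h : ℂ → F) (z : ℂ) {r : ℝ} (hr : r ≠ 0) (θ : ℝ) :
    r • ((circleMap 0 r θ)⁻¹ • dbar h (circleMap z r θ)) =
      (2⁻¹ : ℂ) • (fderiv ℝ h (circleMap z r θ) (circleMap 0 1 θ) +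
        Complex.I • fderiv ℝ h (circleMap z r θ) (circleMap 0 1 θ * Complex.I)) := by
  have hconj : (r : ℂ) * (circleMap 0 r θ)⁻¹ = conj (circleMap 0 1 θ) := by
    have hr' : (r : ℂ) ≠ 0 := by exact_mod_cast hr
    have hconj' : conj (circleMap 0 1 θ) = (circleMap 0 1 θ)⁻¹ := by
      rw [Complex.inv_def, Complex.normSq_eq_norm_sq]
      simp
    rw [hconj', circleMap_zero, circleMap_zero]
    field_simp
    simp
  rw [← conj_smul_map_one_add_I_smul_map_I, ← hconj, dbar, ← Complex.coe_smul, smul_smul,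
    smul_comm]

variable {h : ℂ → F}

theorem integrableOn_fderiv_circleMap (hh : ContDiff ℝ 1 h) (hc : HasCompactSupport h) (z : ℂ)
    {v : ℝ → ℂ} (hv : Continuous v) (a b c : ℝ) :
    IntegrableOn (fun p : ℝ × ℝ => fderiv ℝ h (circleMap z p.1 p.2) (v p.2))
      (Ioi a ×ˢ Ioo b c) := by
  obtain ⟨R, hR⟩ := (hc.fderiv ℝ).isCompact.isBounded.subset_closedBall z
  have hfar : ∀ p : ℝ × ℝ, R < p.1 → fderiv ℝ h (circleMap z p.1 p.2) = 0 := fun p hp =>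
    image_eq_zero_of_notMem_tsupport fun hmem =>
      (hp.trans_le (le_abs_self _)).not_ge (by simpa [dist_eq_norm] using hR hmem)
  have hcirc : Continuous fun p : ℝ × ℝ => circleMap z p.1 p.2 := by
    unfold circleMap
    fun_prop
  exact integrableOn_Ioi_prod_Ioo_of_eq_zero (R := R)
    (((hh.continuous_fderiv one_ne_zero).comp hcirc).clm_apply (by fun_prop))
    (fun p hp => by simp [hfar p hp]) a b c

variable [CompleteSpace F]

theorem integral_Ioi_fderiv_ray (hh : ContDiff ℝ 1 h) (hc : HasCompactSupport h) (z : ℂ) {v : ℂ}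
    (hv : v ≠ 0) : ∫ r : ℝ in Ioi 0, fderiv ℝ h (z + r • v) v = -h z := by
  set ray : ℝ → ℂ := fun r => z + r • v with hray
  have hray' : ∀ r, HasDerivAt ray v r := fun r => by
    simpa [hray] using ((hasDerivAt_id r).smul_const v).const_add z
  have hderiv : ∀ r, deriv (h ∘ ray) r = fderiv ℝ h (ray r) v := fun r =>
    ((hh.differentiable one_ne_zero _).hasFDerivAt.comp_hasDerivAt r (hray' r)).deriv
  have hemb : IsClosedEmbedding ray :=
    (Homeomorph.addLeft z).isClosedEmbedding.comp (isClosedEmbedding_smul_left (𝕜 := ℝ) hv)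
  have hC1 : ContDiff ℝ 1 (h ∘ ray) := hh.comp (by fun_prop)
  have := (hc.comp_isClosedEmbedding hemb).integral_Ioi_deriv_eq hC1 0
  simp only [hderiv] at this
  simpa [hray] using this

theorem intervalIntegral_fderiv_circleMap_eq_zero (hh : ContDiff ℝ 1 h) (z : ℂ) (r : ℝ) :
    ∫ θ in -Real.pi..Real.pi, fderiv ℝ h (circleMap z r θ) (circleMap 0 r θ * Complex.I) = 0 := by
  have hcont : Continuous fun θ => fderiv ℝ h (circleMap z r θ) (circleMap 0 r θ * Complex.I) :=
    ((hh.continuous_fderiv one_ne_zero).comp (continuous_circleMap z r)).clm_apply (by fun_prop)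
  rw [intervalIntegral.integral_eq_sub_of_hasDerivAt (f := h ∘ circleMap z r)
    (fun θ _ => (hh.differentiable one_ne_zero _).hasFDerivAt.comp_hasDerivAt θ
      (hasDerivAt_circleMap z r θ)) (hcont.intervalIntegrable _ _), sub_eq_zero]
  have : circleMap z r Real.pi = circleMap z r (-Real.pi) := by
    rw [← periodic_circleMap z r (-Real.pi)]
    ring_nf
  simp [this]

theorem setIntegral_fderiv_circleMap_radial (hh : ContDiff ℝ 1 h) (hc : HasCompactSupport h)
    (z : ℂ) :
    ∫ p in Ioi (0 : ℝ) ×ˢ Ioo (-Real.pi) Real.pi,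
      fderiv ℝ h (circleMap z p.1 p.2) (circleMap 0 1 p.2) = -((2 * Real.pi) • h z) := by
  have hint := integrableOn_fderiv_circleMap hh hc z (continuous_circleMap 0 1) 0 (-Real.pi) Real.pi
  have hray : ∀ θ, ∫ r in Ioi (0 : ℝ), fderiv ℝ h (circleMap z r θ) (circleMap 0 1 θ) = -h z :=
    fun θ => by
      have hv : circleMap 0 1 θ ≠ 0 := circleMap_ne_center one_ne_zero
      simpa [circleMap] using integral_Ioi_fderiv_ray hh hc z hv
  rw [IntegrableOn, Measure.volume_eq_prod, ← Measure.prod_restrict] at hint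
  rw [Measure.volume_eq_prod, ← Measure.prod_restrict, integral_prod_symm _ hint]
  simp [hray, two_mul, Real.pi_pos.le]

theorem setIntegral_fderiv_circleMap_tangential (hh : ContDiff ℝ 1 h) (hc : HasCompactSupport h)
    (z : ℂ) :
    ∫ p in Ioi (0 : ℝ) ×ˢ Ioo (-Real.pi) Real.pi,
      fderiv ℝ h (circleMap z p.1 p.2) (circleMap 0 1 p.2 * Complex.I) = 0 := by
  have hint := integrableOn_fderiv_circleMap hh hc z
    ((continuous_circleMap 0 1).mul continuous_const) 0 (-Real.pi) Real.pi (v := fun θ =>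
      circleMap 0 1 θ * Complex.I)
  rw [Measure.volume_eq_prod] at hint ⊢
  rw [setIntegral_prod _ hint]
  refine setIntegral_eq_zero_of_forall_eq_zero fun r hr => ?_
  have hscale : ∀ θ, circleMap 0 r θ * Complex.I = r • (circleMap 0 1 θ * Complex.I) := fun θ => by
    simp [circleMap, mul_assoc]
  have hcircle := intervalIntegral_fderiv_circleMap_eq_zero hh z r
  simp only [hscale, map_smul, intervalIntegral.integral_smul] at hcircle
  rw [smul_eq_zero_iff_right (ne_of_gt hr), intervalIntegral.integral_of_le
    (by linarith [Real.pi_pos]), integral_Ioc_eq_integral_Ioo] at hcircle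
  exact hcircle

/- In polar coordinates about `z` the integrand splits into a radial derivative, which integrates
to `-h z` along every ray, and a tangential one, which integrates to `0` along every circle. -/
theorem integral_inv_sub_smul_dbar (hh : ContDiff ℝ 1 h) (hc : HasCompactSupport h) (z : ℂ) :
    ∫ w, (w - z)⁻¹ • dbar h w = -(Real.pi • h z) := by
  have hrad := integrableOn_fderiv_circleMap hh hc z (continuous_circleMap 0 1) 0 (-Real.pi) Real.pi
  have htan := integrableOn_fderiv_circleMap hh hc z
    ((continuous_circleMap 0 1).mul continuous_const) 0 (-Real.pi) Real.pi (v := fun θ =>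
      circleMap 0 1 θ * Complex.I)
  calc ∫ w, (w - z)⁻¹ • dbar h w = ∫ u, u⁻¹ • dbar h (z + u) := by
        simpa using (integral_add_left_eq_self (fun w => (w - z)⁻¹ • dbar h w) z).symm
    _ = ∫ p in Ioi (0 : ℝ) ×ˢ Ioo (-Real.pi) Real.pi, (2⁻¹ : ℂ) •
          (fderiv ℝ h (circleMap z p.1 p.2) (circleMap 0 1 p.2) +
            Complex.I • fderiv ℝ h (circleMap z p.1 p.2) (circleMap 0 1 p.2 * Complex.I)) := by
        rw [← Complex.integral_comp_polarCoord_symm, polarCoord_target]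
        refine setIntegral_congr_fun (measurableSet_Ioi.prod measurableSet_Ioo) ?_
        rintro ⟨r, θ⟩ ⟨hr, -⟩
        have hp : Complex.polarCoord.symm (r, θ) = circleMap 0 r θ := by
          simp [circleMap, Complex.exp_mul_I]
        have hz : z + circleMap 0 r θ = circleMap z r θ := by simp [circleMap]
        simpa only [hp, hz] using smul_inv_smul_dbar_circleMap h z (ne_of_gt hr) θ
    _ = -(Real.pi • h z) := by
        rw [integral_smul, integral_add hrad (htan.fun_smul Complex.I), integral_smul,
          setIntegral_fderiv_circleMap_radial hh hc, setIntegral_fderiv_circleMap_tangential hh hc,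
          smul_zero, add_zero, smul_neg, mul_smul, ← Complex.coe_smul 2, smul_smul]
        norm_num

end CauchyPompeiu

/-! ### Approximation by polynomials -/

section PolynomialApproximation

open scoped Manifold ContDiff

variable {E : Set ℂ}

/-- The uniform closure in `C(E, ℂ)` of the polynomials: the algebra `P(E)` of uniform
approximation theory. -/
abbrev polynomialClosure (E : Set ℂ) [CompactSpace E] : Subalgebra ℂ C(E, ℂ) :=
  (polynomialFunctions E).topologicalClosure

/-- The coordinate function as an element of `P(E)`. -/
def polynomialClosure.coord (E : Set ℂ) [CompactSpace E] : polynomialClosure E :=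
  ⟨Polynomial.toContinuousMapOnAlgHom E Polynomial.X,
    Subalgebra.le_topologicalClosure _ ⟨Polynomial.X, trivial, rfl⟩⟩

/-- Evaluation at a point of `E` as a functional on `P(E)`. -/
def polynomialClosure.eval [CompactSpace E] (s : E) : polynomialClosure E →L[ℂ] ℂ :=
  (ContinuousMap.evalCLM ℂ s).comp (polynomialClosure E).toSubmodule.subtypeL

namespace polynomialClosure

variable [CompactSpace E]

theorem eval_apply (s : E) (b : polynomialClosure E) : eval s b = (b : C(E, ℂ)) s := rfl

theorem exists_polynomial_norm_sub_lt (b : polynomialClosure E) {ε : ℝ} (hε : 0 < ε) :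
    ∃ p : Polynomial ℂ, ∀ s : E, ‖p.eval (s : ℂ) - eval s b‖ < ε := by
  obtain ⟨_, ⟨p, -, rfl⟩, hp⟩ := Metric.mem_closure_iff.1 b.2 ε hε
  refine ⟨p, fun s => ?_⟩
  rw [norm_sub_rev, ← dist_eq_norm]
  exact (ContinuousMap.dist_apply_le_dist s).trans_lt hp

theorem spectrum_coord_subset (hE : IsFull E) : spectrum ℂ (coord E) ⊆ E := by
  intro w hw
  by_contra hwE
  have : IsClosed (polynomialClosure E : Set C(E, ℂ)) :=
    Subalgebra.isClosed_topologicalClosure _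
  have hbdd := Subalgebra.spectrum_isBounded_connectedComponentIn (polynomialClosure E) (coord E) hw
  have hrange : spectrum ℂ (coord E : C(E, ℂ)) = E := by
    rw [ContinuousMap.spectrum_eq_range]
    ext
    simp [coord]
  rw [hrange] at hbdd
  exact hE w hwE hbdd

theorem eval_resolvent_coord (hE : IsFull E) {w : ℂ} (hw : w ∉ E) (s : E) :
    eval s (resolvent (coord E) w) = (w - s)⁻¹ := by
  have hunit : IsUnit (algebraMap ℂ _ w - coord E) :=
    spectrum.notMem_iff.1 fun h => hw (spectrum_coord_subset hE h)
  have hmul : eval s (resolvent (coord E) w) * (w - s) = 1 := by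
    simpa [eval_apply, coord, resolvent] using
      congrArg (eval s) (Ring.inverse_mul_cancel _ hunit)
  exact eq_inv_of_mul_eq_one_left hmul

variable {g : ℂ → ℂ}

theorem continuous_smul_resolvent_coord (hE : IsFull E) (hg : Continuous g)
    (hgE : ∀ z ∈ E, g =ᶠ[𝓝 z] 0) : Continuous fun w => g w • resolvent (coord E) w := by
  have : CompleteSpace (polynomialClosure E) :=
    (Subalgebra.isClosed_topologicalClosure _).completeSpace_coe
  refine continuous_iff_continuousAt.2 fun w => ?_
  by_cases hw : w ∈ E
  · refine (continuousAt_const (y := 0)).congr ?_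
    filter_upwards [hgE w hw] with v hv
    simp [hv]
  · have hw' : w ∈ resolventSet ℂ (coord E) :=
      not_not.1 fun h => hw (spectrum_coord_subset hE h)
    exact hg.continuousAt.smul (spectrum.hasDerivAt_resolvent_const_left hw').continuousAt

theorem eval_integral_smul_resolvent_coord (hE : IsFull E) (hg : Continuous g)
    (hgc : HasCompactSupport g) (hgE : ∀ z ∈ E, g =ᶠ[𝓝 z] 0) (s : E) :
    eval s (∫ w, g w • resolvent (coord E) w) = ∫ w : ℂ, (w - s)⁻¹ • g w := by
  have : CompleteSpace (polynomialClosure E) :=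
    (Subalgebra.isClosed_topologicalClosure _).completeSpace_coe
  have hint : Integrable fun w => g w • resolvent (coord E) w :=
    (continuous_smul_resolvent_coord hE hg hgE).integrable_of_hasCompactSupport hgc.smul_right
  rw [← (eval s).integral_comp_comm hint]
  refine integral_congr_ae (.of_forall fun w => ?_)
  by_cases hw : w ∈ E
  · simp [(hgE w hw).self_of_nhds]
  · simp [eval_resolvent_coord hE hw, mul_comm]

end polynomialClosure

theorem IsFull.exists_polynomial_norm_sub_lt (hE : IsFull E) (hEc : IsCompact E) {h : ℂ → ℂ}
    (hh : ContDiff ℝ 1 h) (hc : HasCompactSupport h) (hhE : ∀ z ∈ E, dbar h =ᶠ[𝓝 z] 0) {ε : ℝ}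
    (hε : 0 < ε) : ∃ p : Polynomial ℂ, ∀ z ∈ E, ‖p.eval z - h z‖ < ε := by
  have := isCompact_iff_compactSpace.1 hEc
  obtain ⟨p, hp⟩ := polynomialClosure.exists_polynomial_norm_sub_lt
    (-(Real.pi : ℂ)⁻¹ • ∫ w, dbar h w • resolvent (polynomialClosure.coord E) w) hε
  refine ⟨p, fun z hz => ?_⟩
  convert hp ⟨z, hz⟩ using 3
  rw [map_smul, polynomialClosure.eval_integral_smul_resolvent_coord hE (continuous_dbar hh)
    (hasCompactSupport_dbar hc) hhE, integral_inv_sub_smul_dbar hh hc, ← Complex.coe_smul,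
    smul_neg, neg_smul, neg_neg, inv_smul_smul₀ (by exact_mod_cast Real.pi_ne_zero)]

theorem exists_contDiff_eventuallyEq_one_zero {V : Type*} [NormedAddCommGroup V]
    [NormedSpace ℝ V] [FiniteDimensional ℝ V] (n : ℕ∞) {X Y : Set V} (hX : IsCompact X)
    (hY : IsClosed Y) (hXY : Disjoint X Y) :
    ∃ h : V → ℂ, ContDiff ℝ n h ∧ HasCompactSupport h ∧
      (∀ z ∈ X, h =ᶠ[𝓝 z] 1) ∧ ∀ z ∈ Y, h =ᶠ[𝓝 z] 0 := by
  have := FiniteDimensional.proper_real V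
  obtain ⟨R, hR⟩ := hX.isBounded.subset_ball 0
  obtain ⟨f, hf0, hf1, -⟩ := exists_contMDiffMap_zero_one_nhds_of_isClosed 𝓘(ℝ, V) (n := n)
    (hY.union isOpen_ball.isClosed_compl) hX.isClosed
    (disjoint_union_left.2 ⟨hXY.symm, disjoint_compl_left_iff_subset.2 hR⟩)
  rw [eventually_nhdsSet_iff_forall] at hf0 hf1
  refine ⟨fun z => f z, Complex.ofRealCLM.contDiff.comp f.contMDiff.contDiff,
    .intro (isCompact_closedBall 0 R) fun z hz => ?_, fun z hz => ?_, fun z hz => ?_⟩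
  · have : f z = 0 := (hf0 z (Or.inr fun h => hz (ball_subset_closedBall h))).self_of_nhds
    simp [this]
  · filter_upwards [hf1 z hz] with y hy
    simp [hy]
  · filter_upwards [hf0 z (Or.inl hz)] with y hy
    simp [hy]

theorem exists_polynomial_near_one_near_zero {X Y : Set ℂ} (hX : IsCompact X) (hY : IsCompact Y)
    (hXY : Disjoint X Y) (hfull : IsFull (X ∪ Y)) {ε : ℝ} (hε : 0 < ε) :
    ∃ p : Polynomial ℂ, (∀ z ∈ X, ‖p.eval z - 1‖ < ε) ∧ ∀ z ∈ Y, ‖p.eval z‖ < ε := by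
  obtain ⟨h, hh, hc, h1, h0⟩ := exists_contDiff_eventuallyEq_one_zero 1 hX hY.isClosed hXY
  obtain ⟨p, hp⟩ := hfull.exists_polynomial_norm_sub_lt (hX.union hY) hh hc
    (by
      rintro z (hz | hz)
      exacts [dbar_eventuallyEq_zero (h1 z hz), dbar_eventuallyEq_zero (h0 z hz)]) hε
  refine ⟨p, fun z hz => ?_, fun z hz => ?_⟩
  · simpa [(h1 z hz).self_of_nhds] using hp z (Or.inl hz)
  · simpa [(h0 z hz).self_of_nhds] using hp z (Or.inr hz)

end PolynomialApproximation

/-! ### Hulls with respect to a function algebra -/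

section BiSup

variable {α F : Type*} [SeminormedAddCommGroup F] {φ : α → F} {K : Set α}

theorem norm_le_biSup_norm (hφ : Bornology.IsBounded (φ '' K)) {w : α} (hw : w ∈ K) :
    ‖φ w‖ ≤ ⨆ v ∈ K, ‖φ v‖ := by
  obtain ⟨B, hB⟩ := hφ.exists_norm_le
  have hbdd : BddAbove (range fun v => ⨆ _ : v ∈ K, ‖φ v‖) := by
    refine ⟨max B 0, ?_⟩
    rintro _ ⟨v, rfl⟩
    exact Real.iSup_le (fun hv => (hB _ (mem_image_of_mem φ hv)).trans (le_max_left _ _))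
      (le_max_right _ _)
  simpa [hw] using le_ciSup hbdd w

theorem biSup_norm_le {C : ℝ} (hC : 0 ≤ C) (hK : ∀ w ∈ K, ‖φ w‖ ≤ C) : ⨆ w ∈ K, ‖φ w‖ ≤ C :=
  Real.iSup_le (fun v => Real.iSup_le (fun hv => hK v hv) hC) hC

theorem biSup_norm_nonneg (φ : α → F) (K : Set α) : 0 ≤ ⨆ w ∈ K, ‖φ w‖ :=
  Real.iSup_nonneg fun _ => Real.iSup_nonneg fun _ => norm_nonneg _

end BiSup

/-- The hull of `K` with respect to a set `A` of complex functions. As in `polyHull1`, the supremum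
of an unbounded function and the supremum over the empty set are `0`. -/
def functionHull {α : Type*} (A : Set (α → ℂ)) (K : Set α) : Set α :=
  {z | ∀ φ ∈ A, ‖φ z‖ ≤ ⨆ w ∈ K, ‖φ w‖}

section FunctionHull

variable {α : Type*}

theorem functionHull_mono {A : Set (α → ℂ)} {K L : Set α}
    (hL : ∀ φ ∈ A, Bornology.IsBounded (φ '' L)) (hKL : K ⊆ L) :
    functionHull A K ⊆ functionHull A L := fun _ hz φ hφ =>
  (hz φ hφ).trans <| biSup_norm_le (biSup_norm_nonneg φ L) fun _ hw =>
    norm_le_biSup_norm (hL φ hφ) (hKL hw)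

theorem functionHull_empty {A : Set (α → ℂ)} (hA : 1 ∈ A) : functionHull A ∅ = ∅ :=
  eq_empty_of_forall_notMem fun z hz => by
    have := hz 1 hA
    norm_num at this

theorem subset_polyHull1 {F : Set ℂ} (hF : Bornology.IsBounded F) : F ⊆ polyHull1 F :=
  fun _ hz p => norm_le_biSup_norm
    (hF.isCompact_closure.image p.continuous |>.isBounded.subset (image_mono subset_closure)) hz

theorem polynomial_eval_comp_mem {R : Type*} [CommSemiring R] {A : Subalgebra R (α → R)}
    {f : α → R} (hf : f ∈ A) (p : Polynomial R) : (fun w => p.eval (f w)) ∈ A := by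
  have : (fun w => p.eval (f w)) = Polynomial.aeval f p := by
    funext w
    simp
  rw [this]
  exact Algebra.adjoin_le (singleton_subset_iff.2 hf) (Polynomial.aeval_mem_adjoin_singleton R f)

variable {A : Subalgebra ℂ (α → ℂ)} {K L : Set α}

theorem norm_mul_one_sub_le_of_near_one_near_zero {φ q : α → ℂ} (hφ : φ ∈ A) (hq : q ∈ A)
    (hK : Bornology.IsBounded (φ '' K)) (hL : Bornology.IsBounded (φ '' L)) {z : α}
    (hz : z ∈ functionHull (A : Set (α → ℂ)) (K ∪ L)) {ε : ℝ}
    (hq1 : ∀ w ∈ insert z K, ‖q w - 1‖ ≤ ε) (hq0 : ∀ w ∈ L, ‖q w‖ ≤ ε) :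
    ‖φ z‖ * (1 - ε) ≤ (⨆ w ∈ K, ‖φ w‖) * (1 + ε) + (⨆ w ∈ L, ‖φ w‖) * ε := by
  have hε : 0 ≤ ε := (norm_nonneg _).trans (hq1 z (mem_insert z K))
  have hC : 0 ≤ ⨆ w ∈ K, ‖φ w‖ := biSup_norm_nonneg φ K
  have hB : 0 ≤ ⨆ w ∈ L, ‖φ w‖ := biSup_norm_nonneg φ L
  have hqz : 1 - ε ≤ ‖q z‖ := by
    have := norm_sub_norm_le 1 (q z)
    rw [norm_one, norm_sub_rev] at this
    linarith [hq1 z (mem_insert z K)]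
  have hqK : ∀ w ∈ K, ‖q w‖ ≤ 1 + ε := fun w hw => by
    have := norm_sub_norm_le (q w) 1
    rw [norm_one] at this
    linarith [hq1 w (mem_insert_of_mem z hw)]
  refine (mul_le_mul_of_nonneg_left hqz (norm_nonneg _)).trans ?_
  rw [← norm_mul]
  refine (hz _ (A.mul_mem hφ hq)).trans (biSup_norm_le (by positivity) ?_)
  rintro w (hw | hw)
  · refine le_add_of_le_of_nonneg ?_ (by positivity)
    rw [Pi.mul_apply, norm_mul]
    gcongr
    exacts [norm_le_biSup_norm hK hw, hqK w hw]
  · refine le_add_of_nonneg_of_le (by positivity) ?_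
    rw [Pi.mul_apply, norm_mul]
    gcongr
    exacts [norm_le_biSup_norm hL hw, hq0 w hw]

theorem mem_functionHull_of_forall_exists_near_one_near_zero
    (hK : ∀ φ ∈ A, Bornology.IsBounded (φ '' K)) (hL : ∀ φ ∈ A, Bornology.IsBounded (φ '' L))
    {z : α} (hz : z ∈ functionHull (A : Set (α → ℂ)) (K ∪ L))
    (hq : ∀ ε > 0, ∃ q ∈ A, (∀ w ∈ insert z K, ‖q w - 1‖ < ε) ∧ ∀ w ∈ L, ‖q w‖ < ε) :
    z ∈ functionHull (A : Set (α → ℂ)) K := fun φ hφ => by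
  have hbound : ∀ ε > 0,
      ‖φ z‖ * (1 - ε) ≤ (⨆ w ∈ K, ‖φ w‖) * (1 + ε) + (⨆ w ∈ L, ‖φ w‖) * ε := fun ε hε =>
    let ⟨_, hqA, hq1, hq0⟩ := hq ε hε
    norm_mul_one_sub_le_of_near_one_near_zero hφ hqA (hK φ hφ) (hL φ hφ) hz
      (fun w hw => (hq1 w hw).le) fun w hw => (hq0 w hw).le
  have hleft : Tendsto (fun ε : ℝ => ‖φ z‖ * (1 - ε)) (𝓝[>] 0) (𝓝 ‖φ z‖) :=
    (Continuous.tendsto' (by fun_prop) 0 _ (by simp)).mono_left nhdsWithin_le_nhds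
  have hright : Tendsto (fun ε : ℝ => (⨆ w ∈ K, ‖φ w‖) * (1 + ε) + (⨆ w ∈ L, ‖φ w‖) * ε)
      (𝓝[>] 0) (𝓝 (⨆ w ∈ K, ‖φ w‖)) :=
    (Continuous.tendsto' (by fun_prop) 0 _ (by simp)).mono_left nhdsWithin_le_nhds
  exact le_of_tendsto_of_tendsto hleft hright (eventually_mem_nhdsWithin.mono hbound)

theorem mem_functionHull_of_isFull {X Y : Set ℂ} (hX : IsCompact X) (hY : IsCompact Y)
    (hXY : Disjoint X Y) (hfull : IsFull (X ∪ Y))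
    (hK : ∀ φ ∈ A, Bornology.IsBounded (φ '' K)) (hL : ∀ φ ∈ A, Bornology.IsBounded (φ '' L))
    {f : α → ℂ} (hf : f ∈ A) (hKX : MapsTo f K X) (hLY : MapsTo f L Y)
    {z : α} (hz : z ∈ functionHull (A : Set (α → ℂ)) (K ∪ L)) (hzX : f z ∈ X) :
    z ∈ functionHull (A : Set (α → ℂ)) K := by
  refine mem_functionHull_of_forall_exists_near_one_near_zero hK hL hz fun ε hε => ?_
  obtain ⟨p, hp1, hp0⟩ := exists_polynomial_near_one_near_zero hX hY hXY hfull hε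
  exact ⟨_, polynomial_eval_comp_mem hf p,
    forall_insert_of_forall (fun w hw => hp1 _ (hKX hw)) (hp1 _ hzX), fun w hw => hp0 _ (hLY hw)⟩

theorem mapsTo_functionHull {X : Set ℂ} (hX : IsCompact X) (hfull : IsFull X)
    (hK : ∀ φ ∈ A, Bornology.IsBounded (φ '' K)) {f : α → ℂ} (hf : f ∈ A) (hKX : MapsTo f K X) :
    MapsTo f (functionHull (A : Set (α → ℂ)) K) X := fun z hz => by
  by_contra hzX
  have hdisj : Disjoint {f z} X := disjoint_singleton_left.2 hzX
  have : z ∈ functionHull (A : Set (α → ℂ)) ∅ :=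
    mem_functionHull_of_isFull isCompact_singleton hX hdisj
      ((isFull_singleton _).union hfull isCompact_singleton hX hdisj) (by simp) hK hf
      (mapsTo_empty f _) hKX (by rwa [empty_union]) rfl
  rwa [functionHull_empty A.one_mem] at this

theorem functionHull_union (hK : ∀ φ ∈ A, Bornology.IsBounded (φ '' K))
    (hL : ∀ φ ∈ A, Bornology.IsBounded (φ '' L)) {f : α → ℂ} (hf : f ∈ A)
    (hdisj : Disjoint (polyHull1 (f '' K)) (polyHull1 (f '' L))) :
    functionHull (A : Set (α → ℂ)) (K ∪ L) = functionHull A K ∪ functionHull A L := by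
  set X := polyHull1 (f '' K)
  set Y := polyHull1 (f '' L)
  have hX : IsCompact X := isCompact_polyHull1 _
  have hY : IsCompact Y := isCompact_polyHull1 _
  have hfull : IsFull (X ∪ Y) := (isFull_polyHull1 _).union (isFull_polyHull1 _) hX hY hdisj
  have hKX : MapsTo f K X := mapsTo_iff_image_subset.2 (subset_polyHull1 (hK f hf))
  have hLY : MapsTo f L Y := mapsTo_iff_image_subset.2 (subset_polyHull1 (hL f hf))
  have hKL : ∀ φ ∈ A, Bornology.IsBounded (φ '' (K ∪ L)) := fun φ hφ => by
    simpa only [image_union] using (hK φ hφ).union (hL φ hφ)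
  refine Subset.antisymm (fun z hz => ?_) (union_subset (functionHull_mono hKL subset_union_left)
    (functionHull_mono hKL subset_union_right))
  rcases mapsTo_functionHull (hX.union hY) hfull hKL hf (hKX.union_union hLY) hz with hzX | hzY
  · exact Or.inl (mem_functionHull_of_isFull hX hY hdisj hfull hK hL hf hKX hLY hz hzX)
  · rw [union_comm] at hz hfull
    exact Or.inr (mem_functionHull_of_isFull hY hX hdisj.symm hfull hL hK hf hLY hKX hz hzY)

end FunctionHull

/-- The algebra of functions on `V` that are holomorphic on `D`; their values off `D` are
arbitrary. -/
def holomorphicAlgebra {V : Type*} [NormedAddCommGroup V] [NormedSpace ℂ V] (D : Set V) :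
    Subalgebra ℂ (V → ℂ) where
  carrier := {φ | DifferentiableOn ℂ φ D}
  mul_mem' := DifferentiableOn.mul
  add_mem' := DifferentiableOn.add
  algebraMap_mem' := differentiableOn_const

theorem isBounded_image_of_mem_holomorphicAlgebra {V : Type*} [NormedAddCommGroup V]
    [NormedSpace ℂ V] {D K : Set V} (hK : IsCompact K) (hKD : K ⊆ D) {φ : V → ℂ}
    (hφ : φ ∈ holomorphicAlgebra D) : Bornology.IsBounded (φ '' K) :=
  (hK.image_of_continuousOn (hφ.continuousOn.mono hKD)).isBounded

theorem holHull_eq_inter_functionHull {N : ℕ} (D K : Set (EN N)) :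
    holHull D K = D ∩ functionHull (holomorphicAlgebra D : Set (EN N → ℂ)) K := rfl

end

theorem kallin_holomorphic_hulls_general {N : ℕ} (D K L : Set (EN N))
    (hK : IsCompact K) (hKD : K ⊆ D) (hL : IsCompact L) (hLD : L ⊆ D)
    (f : EN N → ℂ) (hf : DifferentiableOn ℂ f D)
    (hdisj : Disjoint (polyHull1 (f '' K)) (polyHull1 (f '' L))) :
    holHull D (K ∪ L) = holHull D K ∪ holHull D L := by
  simp only [holHull_eq_inter_functionHull]
  rw [functionHull_union (A := holomorphicAlgebra D)
    (fun _ => isBounded_image_of_mem_holomorphicAlgebra hK hKD)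
    (fun _ => isBounded_image_of_mem_holomorphicAlgebra hL hLD) hf hdisj, inter_union_distrib_left]

/-- **Kallin's lemma for holomorphic hulls.** Let `K, L` be compact subsets of a pseudoconvex
domain `D ⊆ ℂ^N`. If there is `f ∈ 𝒪(D)` such that the polynomial hulls of `f(K)` and `f(L)`
in `ℂ` are disjoint, then the `𝒪(D)`-hull of `K ∪ L` is the union of the `𝒪(D)`-hulls of `K`
and of `L`. -/
theorem kallin_holomorphic_hulls {N : ℕ} (D : Set (EN N)) (hD : Pseudoconvex D)
    (K L : Set (EN N)) (hK : IsCompact K) (hKD : K ⊆ D) (hL : IsCompact L) (hLD : L ⊆ D)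
    (f : EN N → ℂ) (hf : DifferentiableOn ℂ f D)
    (hdisj : Disjoint (polyHull1 (f '' K)) (polyHull1 (f '' L))) :
    holHull D (K ∪ L) = holHull D K ∪ holHull D L :=
  kallin_holomorphic_hulls_general D K L hK hKD hL hLD f hf hdisj
end
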